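/- arXiv:2007.01104 — 4 statements merged into one kernel-verified Lean document; each statement's English description precedes it below -/
import Mathlib

section
/- Let Γ be a finite k-regular simple graph on v vertices, let A be its adjacency matrix (a real symmetric 0/1 matrix), and let α be the smallest eigenvalue of A. Then every coclique (independent set) C of Γ satisfies |C| · (k − α) ≤ (−α) · v (equivalently, |C| ≤ v/(1 − k/α) when α < 0). -/
/-! If `α` is the least eigenvalue of `A`, then `B = A - α I` is positive semidefinite with constant
row sum `k - α`. Evaluating its quadratic form at `n f - (∑ f) 1`, where `f` is the indicator
function of the coclique `C` in a graph on `n` vertices, gives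
`(k - α) |C|² ≤ n ⟨f, B f⟩ = -α n |C|`. -/

open Matrix

section Eigenvalues

open scoped MatrixOrder ComplexOrder

variable {V 𝕜 : Type*} [Fintype V] [RCLike 𝕜] {A : Matrix V V 𝕜} {α : ℝ}

lemma le_eigenvalues_of_forall_eigenvector [DecidableEq V] (hA : A.IsHermitian)
    (hα : ∀ β : ℝ, (∃ v : V → 𝕜, v ≠ 0 ∧ A *ᵥ v = β • v) → α ≤ β) (i : V) :
    α ≤ hA.eigenvalues i := by
  refine hα _ ⟨hA.eigenvectorBasis i, fun hzero ↦ ?_, hA.mulVec_eigenvectorBasis i⟩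
  exact hA.eigenvectorBasis.orthonormal.ne_zero i ((WithLp.ofLp_eq_zero 2).mp hzero)

lemma posSemidef_sub_smul_one_of_le_eigenvalues [DecidableEq V] (hA : A.IsHermitian)
    (hα : ∀ i, α ≤ hA.eigenvalues i) : (A - α • (1 : Matrix V V 𝕜)).PosSemidef := by
  rw [← Matrix.le_iff, ← Algebra.algebraMap_eq_smul_one,
    algebraMap_le_iff_le_spectrum (ha := hA.isSelfAdjoint), hA.spectrum_real_eq_range_eigenvalues]
  exact Set.forall_mem_range.mpr hα

end Eigenvalues

lemma sum_sum_le_card_mul {ι R : Type*} [Semiring R] [PartialOrder R] [IsOrderedRing R]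
    {b : ι → ι → R} {C : Finset ι} {d : R} (hd : ∀ x ∈ C, b x x ≤ d)
    (hC : (C : Set ι).Pairwise fun x y ↦ b x y ≤ 0) :
    ∑ x ∈ C, ∑ y ∈ C, b x y ≤ C.card * d := by
  classical
  rw [← nsmul_eq_mul]
  refine Finset.sum_le_card_nsmul _ _ _ fun x hx ↦ ?_
  have h_off : ∑ y ∈ C.erase x, b x y ≤ 0 := Finset.sum_nonpos fun y hy ↦
    hC hx (Finset.mem_of_mem_erase hy) (Finset.ne_of_mem_erase hy).symm
  calc ∑ y ∈ C, b x y = b x x + ∑ y ∈ C.erase x, b x y := (Finset.add_sum_erase C (b x) hx).symm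
    _ ≤ d + 0 := add_le_add (hd x hx) h_off
    _ = d := add_zero d

section ConstantRowSum

variable {V R : Type*} [Fintype V] [CommRing R] [LinearOrder R] [IsStrictOrderedRing R]
  [StarRing R] [TrivialStar R] {B : Matrix V V R} {μ : R}

lemma mul_sq_sum_le_card_mul_dotProduct_mulVec (hB : B.PosSemidef) (hμ : B *ᵥ 1 = μ • 1)
    (f : V → R) : μ * (∑ x, f x) ^ 2 ≤ (Fintype.card V : R) * (f ⬝ᵥ B *ᵥ f) := by
  cases isEmpty_or_nonempty V
  · simp
  set s := ∑ x, f x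
  set n := (Fintype.card V : R)
  have hn_pos : 0 < n := Nat.cast_pos.mpr Fintype.card_pos
  have h_f_one : f ⬝ᵥ 1 = s := dotProduct_one f
  have h_one_one : (1 : V → R) ⬝ᵥ 1 = n := by simp [n]
  have h_one_B : 1 ⬝ᵥ B *ᵥ f = μ * s := by
    rw [dotProduct_mulVec, ← mulVec_transpose, ← conjTranspose_eq_transpose_of_trivial,
      hB.isHermitian.eq, hμ, smul_dotProduct, one_dotProduct, smul_eq_mul]
  have h_expand : (n • f - s • 1) ⬝ᵥ B *ᵥ (n • f - s • 1) =
      n * (n * (f ⬝ᵥ B *ᵥ f) - μ * s ^ 2) := by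
    simp only [mulVec_sub, mulVec_smul, hμ, dotProduct_sub, sub_dotProduct, smul_dotProduct,
      dotProduct_smul, h_one_B, h_f_one, h_one_one, smul_eq_mul]
    ring
  have h_nonneg := hB.dotProduct_mulVec_nonneg (n • f - s • 1)
  rw [star_trivial, h_expand] at h_nonneg
  exact sub_nonneg.mp (nonneg_of_mul_nonneg_right h_nonneg hn_pos)

lemma mul_sq_card_le_card_mul_sum_sum (hB : B.PosSemidef) (hμ : B *ᵥ 1 = μ • 1)
    (C : Finset V) : μ * (C.card : R) ^ 2 ≤ Fintype.card V * ∑ x ∈ C, ∑ y ∈ C, B x y := by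
  classical
  simpa [dotProduct, mulVec] using
    mul_sq_sum_le_card_mul_dotProduct_mulVec hB hμ fun x ↦ if x ∈ C then 1 else 0

lemma card_mul_le_mul_card_of_posSemidef (hB : B.PosSemidef) (hμ : B *ᵥ 1 = μ • 1) {d : R}
    (hd : ∀ x, B x x ≤ d) {C : Finset V} (hC : (C : Set V).Pairwise fun x y ↦ B x y ≤ 0) :
    C.card * μ ≤ d * Fintype.card V := by
  rcases C.eq_empty_or_nonempty with rfl | hne
  · cases isEmpty_or_nonempty V with
    | inl _ => simp
    | inr hV =>
      have hd_nonneg : 0 ≤ d := hB.diag_nonneg.trans (hd hV.some)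
      simpa using mul_nonneg hd_nonneg (Nat.cast_nonneg (Fintype.card V))
  · have hcard_pos : (0 : R) < C.card := Nat.cast_pos.mpr hne.card_pos
    refine le_of_mul_le_mul_left ?_ hcard_pos
    calc (C.card : R) * (C.card * μ) = μ * (C.card : R) ^ 2 := by ring
      _ ≤ Fintype.card V * ∑ x ∈ C, ∑ y ∈ C, B x y := mul_sq_card_le_card_mul_sum_sum hB hμ C
      _ ≤ Fintype.card V * (C.card * d) :=
        mul_le_mul_of_nonneg_left (sum_sum_le_card_mul (fun x _ ↦ hd x) hC) (Nat.cast_nonneg _)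
      _ = C.card * (d * Fintype.card V) := by ring

end ConstantRowSum

theorem delsarte_hoffman_bound_general {V : Type*} [Fintype V] {A : Matrix V V ℝ}
    (hA : A.IsHermitian) (hdiag : ∀ x, A x x ≤ 0) {k α : ℝ} (hk : A *ᵥ 1 = k • 1)
    (hα : ∀ β : ℝ, (∃ v : V → ℝ, v ≠ 0 ∧ A *ᵥ v = β • v) → α ≤ β)
    {C : Finset V} (hC : (C : Set V).Pairwise fun x y ↦ A x y ≤ 0) :
    (C.card : ℝ) * (k - α) ≤ (-α) * (Fintype.card V : ℝ) := by
  classical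
  have hB : (A - α • (1 : Matrix V V ℝ)).PosSemidef :=
    posSemidef_sub_smul_one_of_le_eigenvalues hA (le_eigenvalues_of_forall_eigenvector hA hα)
  have hB_row : (A - α • (1 : Matrix V V ℝ)) *ᵥ 1 = (k - α) • 1 := by
    rw [sub_mulVec, smul_mulVec, one_mulVec, hk, sub_smul]
  refine card_mul_le_mul_card_of_posSemidef hB hB_row (fun x ↦ ?_) fun x hx y hy hxy ↦ ?_
  · simpa using hdiag x
  · simpa [hxy] using hC hx hy hxy

/-- **Delsarte-Hoffman coclique bound.** If `Γ` is a finite `k`-regular simple graph on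
`v` vertices, `α` is the smallest eigenvalue of its adjacency matrix, and `C` is a
coclique (independent set), then `|C| · (k − α) ≤ (−α) · v`. -/
theorem delsarte_hoffman_bound {V : Type} [Fintype V] [DecidableEq V]
    (Γ : SimpleGraph V) [DecidableRel Γ.Adj]
    (k : ℕ) (hreg : Γ.IsRegularOfDegree k)
    (α : ℝ)
    (hα_eig : ∃ v : V → ℝ, v ≠ 0 ∧ (Γ.adjMatrix ℝ).mulVec v = α • v)
    (hα_min : ∀ β : ℝ, (∃ v : V → ℝ, v ≠ 0 ∧ (Γ.adjMatrix ℝ).mulVec v = β • v) → α ≤ β)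
    (C : Finset V) (hC : ∀ x ∈ C, ∀ y ∈ C, ¬ Γ.Adj x y) :
    (C.card : ℝ) * ((k : ℝ) - α) ≤ (-α) * (Fintype.card V : ℝ) := by
  have hrow : Γ.adjMatrix ℝ *ᵥ 1 = (k : ℝ) • 1 := by
    ext x
    simp [SimpleGraph.adjMatrix_mulVec_apply, hreg.degree_eq x]
  exact delsarte_hoffman_bound_general (Γ.isHermitian_adjMatrix ℝ) (by simp) hrow hα_min
    fun x hx y hy _ ↦ by simp [hC x hx y hy]
end

section
/- Let Γ be a finite k-regular simple graph on v vertices, let A be its adjacency matrix, and let α be the smallest eigenvalue of A. If a coclique C of Γ attains equality in the Delsarte-Hoffman bound, i.e. |C| · (k − α) = (−α) · v, then the 0/1 indicator vector χ_C of C lies in the sum of the eigenspaces of A for the eigenvalues k and α; equivalently, (A − k·I)(A − α·I) χ_C = 0. -/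
/-!
By minimality of `α`, the matrix `B = A - α • 1` is positive semidefinite, and the all-one vector
`1` is an eigenvector of it for the eigenvalue `k - α`. If `y` is the component of `χ_C` orthogonal
to `1`, then `yᵀ B y` is proportional to the defect in the Delsarte-Hoffman bound. Equality
therefore forces `B y = 0`, so `B χ_C` is a multiple of `1`, which `A - k • 1` kills.
-/

open Matrix

lemma sub_smul_one_mulVec {V R S : Type*} [Fintype V] [DecidableEq V] [NonAssocRing R]
    [DistribSMul S R] [IsScalarTower S R R] (A : Matrix V V R) (c : S) (v : V → R) :
    (A - c • (1 : Matrix V V R)) *ᵥ v = A *ᵥ v - c • v := by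
  rw [sub_mulVec, smul_mulVec, one_mulVec]

section QuadraticForm

variable {V R : Type*} [Fintype V] [CommRing R] {B : Matrix V V R} {u : V → R} {μ : R}

/- The vector is the component of `w` orthogonal to `u`, scaled by `u ⬝ᵥ u` to avoid division. -/
lemma dotProduct_mulVec_smul_sub_smul (hB : B.IsSymm) (hu : B *ᵥ u = μ • u) (w : V → R) :
    ((u ⬝ᵥ u) • w - (u ⬝ᵥ w) • u) ⬝ᵥ B *ᵥ ((u ⬝ᵥ u) • w - (u ⬝ᵥ w) • u) =
      (u ⬝ᵥ u) * ((u ⬝ᵥ u) * (w ⬝ᵥ B *ᵥ w) - μ * (u ⬝ᵥ w) ^ 2) := by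
  have hu_left : u ⬝ᵥ B *ᵥ w = μ * (u ⬝ᵥ w) := by
    rw [dotProduct_mulVec, ← mulVec_transpose, hB.eq, hu, smul_dotProduct, smul_eq_mul]
  simp only [mulVec_sub, mulVec_smul, hu, sub_dotProduct, dotProduct_sub, smul_dotProduct,
    dotProduct_smul, smul_eq_mul, hu_left, dotProduct_comm w u]
  ring

end QuadraticForm

section PosSemidef

variable {V : Type*} [Fintype V]

lemma dotProduct_self_smul_mulVec_eq_smul {B : Matrix V V ℝ} (hB : B.PosSemidef) {u w : V → ℝ}
    {μ : ℝ} (hu : B *ᵥ u = μ • u) (h : (u ⬝ᵥ u) * (w ⬝ᵥ B *ᵥ w) = μ * (u ⬝ᵥ w) ^ 2) :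
    (u ⬝ᵥ u) • B *ᵥ w = (u ⬝ᵥ w) • μ • u := by
  have hker : B *ᵥ ((u ⬝ᵥ u) • w - (u ⬝ᵥ w) • u) = 0 := by
    rw [← hB.dotProduct_mulVec_zero_iff, star_trivial,
      dotProduct_mulVec_smul_sub_smul (isHermitian_iff_isSymm.mp hB.isHermitian) hu, h, sub_self,
      mul_zero]
  rwa [mulVec_sub, mulVec_smul, mulVec_smul, hu, sub_eq_zero] at hker

variable [DecidableEq V]

lemma sub_smul_one_mul_sub_smul_one_mulVec_eq_zero {A : Matrix V V ℝ} {k α : ℝ}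
    (hA : (A - α • (1 : Matrix V V ℝ)).PosSemidef) {u w : V → ℝ} (hu0 : u ≠ 0)
    (hu : A *ᵥ u = k • u)
    (h : (u ⬝ᵥ u) * (w ⬝ᵥ A *ᵥ w - α * (w ⬝ᵥ w)) = (k - α) * (u ⬝ᵥ w) ^ 2) :
    ((A - k • (1 : Matrix V V ℝ)) * (A - α • (1 : Matrix V V ℝ))) *ᵥ w = 0 := by
  have hw : (u ⬝ᵥ u) • (A - α • (1 : Matrix V V ℝ)) *ᵥ w = (u ⬝ᵥ w) • (k - α) • u := by
    apply dotProduct_self_smul_mulVec_eq_smul hA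
    · rw [sub_smul_one_mulVec, hu, sub_smul]
    · rwa [sub_smul_one_mulVec, dotProduct_sub, dotProduct_smul, smul_eq_mul]
  have hsmul : (u ⬝ᵥ u) •
      ((A - k • (1 : Matrix V V ℝ)) * (A - α • (1 : Matrix V V ℝ))) *ᵥ w = 0 := by
    rw [← mulVec_mulVec, ← mulVec_smul, hw, mulVec_smul, mulVec_smul, sub_smul_one_mulVec, hu,
      sub_self, smul_zero, smul_zero]
  exact (smul_eq_zero.mp hsmul).resolve_left (dotProduct_self_eq_zero.not.mpr hu0)

open scoped ComplexOrder in
lemma posSemidef_sub_smul_one_of_forall_le_eigenvalue {𝕜 : Type*} [RCLike 𝕜] {A : Matrix V V 𝕜}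
    (hA : A.IsHermitian) {α : ℝ}
    (hα : ∀ β : ℝ, (∃ v : V → 𝕜, v ≠ 0 ∧ A *ᵥ v = β • v) → α ≤ β) :
    (A - α • (1 : Matrix V V 𝕜)).PosSemidef := by
  have hB : (A - α • (1 : Matrix V V 𝕜)).IsHermitian :=
    hA.sub (isHermitian_one.smul (IsSelfAdjoint.all α))
  refine hB.posSemidef_iff_eigenvalues_nonneg.mpr fun i => ?_
  have heigen : A *ᵥ hB.eigenvectorBasis i =
      (hB.eigenvalues i + α) • ⇑(hB.eigenvectorBasis i) := by
    rw [add_smul, ← hB.mulVec_eigenvectorBasis i, sub_smul_one_mulVec,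
      sub_add_cancel]
  have hne : (⇑(hB.eigenvectorBasis i) : V → 𝕜) ≠ 0 :=
    (WithLp.ofLp_eq_zero 2).not.mpr (hB.eigenvectorBasis.orthonormal.ne_zero i)
  exact (le_add_iff_nonneg_left α).mp (hα _ ⟨_, hne, heigen⟩)

end PosSemidef

section CharVec

variable {V : Type*} [DecidableEq V]

/-- The characteristic vector `χ_C` of a set of indices, written with `if` so that it unfolds to
the vector used for a coclique of a graph. -/
def charVec (R : Type*) [Zero R] [One R] (C : Finset V) : V → R :=
  fun x => if x ∈ C then 1 else 0

variable [Fintype V] {R : Type*} [NonAssocSemiring R]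

lemma charVec_dotProduct (C : Finset V) (v : V → R) : charVec R C ⬝ᵥ v = ∑ x ∈ C, v x := by
  simp [charVec, dotProduct]

lemma dotProduct_charVec (v : V → R) (C : Finset V) : v ⬝ᵥ charVec R C = ∑ x ∈ C, v x := by
  simp [charVec, dotProduct]

lemma one_dotProduct_charVec (C : Finset V) : 1 ⬝ᵥ charVec R C = C.card := by
  simp [dotProduct_charVec]

lemma charVec_dotProduct_self (C : Finset V) : charVec R C ⬝ᵥ charVec R C = C.card := by
  rw [charVec_dotProduct]
  simp [charVec]

lemma charVec_dotProduct_mulVec_charVec (A : Matrix V V R) (C : Finset V) :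
    charVec R C ⬝ᵥ A *ᵥ charVec R C = ∑ x ∈ C, ∑ y ∈ C, A x y := by
  simp only [charVec_dotProduct, mulVec, dotProduct_charVec]

end CharVec

lemma adjMatrix_mulVec_one_of_isRegularOfDegree {V R : Type*} [Fintype V] [NonAssocSemiring R]
    {Γ : SimpleGraph V} [DecidableRel Γ.Adj] {k : ℕ} (hΓ : Γ.IsRegularOfDegree k) :
    Γ.adjMatrix R *ᵥ 1 = (k : R) • 1 := by
  ext x
  simp [hΓ.degree_eq x]

theorem delsarte_hoffman_equality_general {V : Type*} [Fintype V] [DecidableEq V]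
    {A : Matrix V V ℝ} {k α : ℝ} (hk : A *ᵥ 1 = k • 1)
    (hα : (A - α • (1 : Matrix V V ℝ)).PosSemidef)
    {C : Finset V} (hC : ∀ x ∈ C, ∀ y ∈ C, A x y = 0)
    (heq : (C.card : ℝ) * (k - α) = (-α) * (Fintype.card V : ℝ)) :
    ((A - k • (1 : Matrix V V ℝ)) * (A - α • (1 : Matrix V V ℝ))) *ᵥ charVec ℝ C = 0 := by
  cases isEmpty_or_nonempty V
  · exact Subsingleton.elim _ _
  have hform : charVec ℝ C ⬝ᵥ A *ᵥ charVec ℝ C = 0 := by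
    rw [charVec_dotProduct_mulVec_charVec]
    exact Finset.sum_eq_zero fun x hx => Finset.sum_eq_zero (hC x hx)
  apply sub_smul_one_mul_sub_smul_one_mulVec_eq_zero hα one_ne_zero hk
  rw [hform, charVec_dotProduct_self, one_dotProduct_charVec, one_dotProduct_one]
  linear_combination -(C.card : ℝ) * heq

/-- **Equality in the Delsarte-Hoffman bound.** If a coclique `C` of a finite `k`-regular
simple graph attains equality `|C| · (k − α) = (−α) · v`, where `α` is the smallest
eigenvalue of the adjacency matrix `A`, then the indicator vector of `C` lies in the sum
of the eigenspaces of `A` for the eigenvalues `k` and `α`, i.e.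
`(A − k·I)(A − α·I) χ_C = 0`. -/
theorem delsarte_hoffman_equality {V : Type} [Fintype V] [DecidableEq V]
    (Γ : SimpleGraph V) [DecidableRel Γ.Adj]
    (k : ℕ) (hreg : Γ.IsRegularOfDegree k)
    (α : ℝ)
    (hα_eig : ∃ v : V → ℝ, v ≠ 0 ∧ (Γ.adjMatrix ℝ).mulVec v = α • v)
    (hα_min : ∀ β : ℝ, (∃ v : V → ℝ, v ≠ 0 ∧ (Γ.adjMatrix ℝ).mulVec v = β • v) → α ≤ β)
    (C : Finset V) (hC : ∀ x ∈ C, ∀ y ∈ C, ¬ Γ.Adj x y)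
    (heq : (C.card : ℝ) * ((k : ℝ) - α) = (-α) * (Fintype.card V : ℝ)) :
    ((Γ.adjMatrix ℝ - (k : ℝ) • (1 : Matrix V V ℝ)) *
        (Γ.adjMatrix ℝ - α • (1 : Matrix V V ℝ))).mulVec
      (fun x => if x ∈ C then (1 : ℝ) else 0) = 0 := by
  exact delsarte_hoffman_equality_general
    (adjMatrix_mulVec_one_of_isRegularOfDegree hreg)
    (posSemidef_sub_smul_one_of_forall_le_eigenvalue
      (isHermitian_iff_isSymm.mpr Γ.isSymm_adjMatrix) hα_min)
    (fun x hx y hy => by simp [hC x hx y hy]) heq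
end

section
/- Let n ≥ 1 and q a prime power. If C is an EKR-set of complete flags in V = F_q^{n+1}, then |C| · (1 + (√q)^{n+1}) ≤ N, where N is the total number of complete flags in V (so |C| ≤ N/(1 + q^{(n+1)/2})). -/
/-- A complete flag in `V = F^{n+1}`: a chain of subspaces `U_1 ⊂ … ⊂ U_n` with
`dim U_i = i` (here `U i` has dimension `i+1` for `i : Fin n`). -/
structure CompleteFlag (F : Type) [Field F] (n : ℕ) where
  U : Fin n → Submodule F (Fin (n + 1) → F)
  dim : ∀ i : Fin n, Module.finrank F (U i) = i + 1
  mono : Monotone U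

/-- Two complete flags `(U_i)` and `(W_i)` are opposite if `U_i ∩ W_{n+1−i} = 0` for all
`i`; with our indexing, the subspace of dimension `n+1-(i+1)` is `W i.rev`. -/
def CompleteFlag.Opposite {F : Type} [Field F] {n : ℕ}
    (F1 F2 : CompleteFlag F n) : Prop :=
  ∀ i : Fin n, F1.U i ⊓ F2.U i.rev = ⊥

/-!
For `1 ≤ i ≤ n` let `Tᵢ` be the operator summing a function over the flags that differ from a given
one exactly in the member of dimension `i`. The `Tᵢ` satisfy the relations of the Hecke algebra of
type `Aₙ`, and the opposition operator `A` is `T_{w₀}`, a product of `ℓ = n (n + 1) / 2` of them.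
Since `T_{n+1-i} A = A Tᵢ`, every eigenspace of `A²` is invariant under all `Tᵢ`.

Let `S` be such an eigenspace within the functions of sum zero, `d` its dimension and `λ²` the
eigenvalue. On `S` the braid relations force all `|det Tᵢ|` to be equal; since `|det Tᵢ| = q ^ e`
with `e` the dimension of the `q`-eigenspace of `Tᵢ`, this `e` does not depend on `i`. As any two
flags are joined by a gallery, no nonzero function in `S` is a common `q`-eigenvector; intersecting
`n` subspaces of codimension `d - e` gives `n e + d ≤ n d`. Comparing determinants in
`|λ| ^ d = q ^ (ℓ e)` yields `|λ| √q ^ (n + 1) ≤ q ^ ℓ`, and Hoffman's ratio bound for `A`, which is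
regular of degree `q ^ ℓ`, finishes the proof.
-/

open Module Equiv

section Permutations

/-- The adjacent transposition `s_i` exchanging `i` and `i + 1`. -/
def adjSwap {n : ℕ} (i : Fin n) : Perm (Fin (n + 1)) := swap i.castSucc i.succ

/-- The number of points of the permutation matrix of `w` in the upper left `x × y` corner. -/
def cornerRank {m : ℕ} (w : Perm (Fin m)) (x y : ℕ) : ℕ :=
  Finset.card {p : Fin m | p < x ∧ w p < y}

/-- The set of inversions of `w`, whose cardinality is the Coxeter length of `w`. -/
def inversionSet {m : ℕ} (w : Perm (Fin m)) : Finset (Fin m × Fin m) :=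
  {p | p.1 < p.2 ∧ w p.2 < w p.1}

variable {m n : ℕ}

lemma mem_inversionSet {w : Perm (Fin m)} {p r : Fin m} :
    (p, r) ∈ inversionSet w ↔ p < r ∧ w r < w p := Finset.mem_filter_univ _

lemma adjSwap_castSucc (i : Fin n) : adjSwap i i.castSucc = i.succ := swap_apply_left _ _

lemma adjSwap_succ (i : Fin n) : adjSwap i i.succ = i.castSucc := swap_apply_right _ _

lemma adjSwap_adjSwap (i : Fin n) (p : Fin (n + 1)) : adjSwap i (adjSwap i p) = p :=
  swap_apply_self ..

lemma adjSwap_mul_self (i : Fin n) : adjSwap i * adjSwap i = 1 := swap_mul_self _ _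

lemma adjSwap_inv (i : Fin n) : (adjSwap i)⁻¹ = adjSwap i := swap_inv _ _

lemma val_adjSwap (i : Fin n) (p : Fin (n + 1)) :
    (adjSwap i p : ℕ) = if (p : ℕ) = i then (i : ℕ) + 1
      else if (p : ℕ) = i + 1 then (i : ℕ) else p := by
  simp only [adjSwap, swap_apply_def, Fin.ext_iff, Fin.val_castSucc, Fin.val_succ]
  split_ifs <;> rfl

lemma adjSwap_lt_iff {i : Fin n} {x : ℕ} (hx : x ≠ i + 1) (p : Fin (n + 1)) :
    (adjSwap i p : ℕ) < x ↔ (p : ℕ) < x := by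
  rw [val_adjSwap]
  split_ifs <;> omega

lemma adjSwap_lt_adjSwap {i : Fin n} {p r : Fin (n + 1)} (hpr : p < r)
    (hne : ¬ (p = i.castSucc ∧ r = i.succ)) : adjSwap i p < adjSwap i r := by
  simp only [Fin.ext_iff, Fin.val_castSucc, Fin.val_succ] at hne
  rw [Fin.lt_def] at hpr ⊢
  rw [val_adjSwap, val_adjSwap]
  split_ifs <;> omega

lemma adjSwap_braid {i j : Fin n} (hij : (i : ℕ) + 1 = j) :
    adjSwap i * adjSwap j * adjSwap i = adjSwap j * adjSwap i * adjSwap j := by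
  have hj : j.castSucc = i.succ := Fin.ext hij.symm
  have hne : i.castSucc ≠ j.succ := by simp only [ne_eq, Fin.ext_iff, Fin.val_castSucc]; grind
  have hi : i.castSucc ≠ i.succ := i.castSucc_lt_succ.ne
  have hj' : j.succ ≠ i.succ := by simp only [ne_eq, Fin.ext_iff, Fin.val_succ]; omega
  rw [adjSwap, adjSwap, hj, swap_mul_swap_mul_swap hi hne, swap_comm i.castSucc,
    swap_comm _ j.succ, swap_mul_swap_mul_swap hj' hne.symm, swap_comm]

lemma revPerm_mul_adjSwap (i : Fin n) :
    Fin.revPerm * adjSwap i = adjSwap i.rev * Fin.revPerm := by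
  ext p
  simp only [Perm.mul_apply, Fin.revPerm_apply, Fin.val_rev, val_adjSwap]
  split_ifs <;> omega

lemma cornerRank_inv (w : Perm (Fin m)) (x y : ℕ) : cornerRank w⁻¹ x y = cornerRank w y x :=
  Finset.card_equiv w⁻¹ fun p => by
    rw [Finset.mem_filter_univ, Finset.mem_filter_univ, ← Perm.mul_apply, mul_inv_cancel,
      Perm.one_apply, and_comm]

lemma cornerRank_succ (w : Perm (Fin m)) {x : ℕ} (hx : x < m) (y : ℕ) :
    cornerRank w (x + 1) y = cornerRank w x y + if (w ⟨x, hx⟩ : ℕ) < y then 1 else 0 := by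
  have hlt (p : Fin m) : (p : ℕ) < x + 1 ↔ (p : ℕ) < x ∨ p = ⟨x, hx⟩ := by
    rw [Fin.ext_iff, Nat.lt_succ_iff_lt_or_eq]
  simp only [cornerRank, hlt, or_and_right, Finset.filter_or]
  rw [Finset.card_union_of_disjoint, ← Finset.filter_filter (· = _),
    Finset.filter_eq', if_pos (Finset.mem_univ _), Finset.filter_singleton]
  · split_ifs <;> rfl
  · rw [Finset.disjoint_filter]
    grind

lemma cornerRank_zero (w : Perm (Fin m)) (y : ℕ) : cornerRank w 0 y = 0 := by
  simp [cornerRank]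

lemma cornerRank_mul_adjSwap (w : Perm (Fin (n + 1))) {i : Fin n} {x : ℕ} (hx : x ≠ i + 1)
    (y : ℕ) : cornerRank (w * adjSwap i) x y = cornerRank w x y :=
  Finset.card_equiv (adjSwap i) fun p => by
    rw [Finset.mem_filter_univ, Finset.mem_filter_univ, Perm.mul_apply, adjSwap_lt_iff hx]

lemma cornerRank_add_one (w : Perm (Fin (n + 1))) (i : Fin n) (y : ℕ) :
    cornerRank w (i + 1) y = cornerRank w i y + if (w i.castSucc : ℕ) < y then 1 else 0 :=
  cornerRank_succ w _ y

lemma cornerRank_add_two (w : Perm (Fin (n + 1))) (i : Fin n) (y : ℕ) :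
    cornerRank w (i + 2) y = cornerRank w i y + (if (w i.castSucc : ℕ) < y then 1 else 0) +
      if (w i.succ : ℕ) < y then 1 else 0 := by
  rw [← cornerRank_add_one]
  exact cornerRank_succ w i.succ.2 y

lemma cornerRank_mul_adjSwap_add_one (w : Perm (Fin (n + 1))) (i : Fin n) (y : ℕ) :
    cornerRank (w * adjSwap i) (i + 1) y =
      cornerRank w i y + if (w i.succ : ℕ) < y then 1 else 0 := by
  rw [cornerRank_add_one, cornerRank_mul_adjSwap w (by omega), Perm.mul_apply, adjSwap_castSucc]

lemma cornerRank_one {x : ℕ} (hx : x ≤ m) (y : ℕ) :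
    cornerRank (1 : Perm (Fin m)) x y = min x y := by
  induction x with
  | zero => rw [cornerRank_zero, Nat.zero_min]
  | succ x ih =>
    rw [cornerRank_succ 1 hx, ih (by omega), Perm.one_apply]
    grind

lemma cornerRank_revPerm {x y : ℕ} (hx : x ≤ m) (hy : y ≤ m) :
    cornerRank (Fin.revPerm : Perm (Fin m)) x y = x + y - m := by
  induction x with
  | zero => rw [cornerRank_zero]; omega
  | succ x ih =>
    rw [cornerRank_succ _ hx, ih (by omega), Fin.revPerm_apply, Fin.val_rev]
    grind

lemma inversionSet_one : inversionSet (1 : Perm (Fin m)) = ∅ :=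
  Finset.filter_eq_empty_iff.2 fun _ _ h => h.1.not_gt h.2

lemma card_inversionSet_mul_adjSwap {w : Perm (Fin (n + 1))} {i : Fin n}
    (hi : w i.succ < w i.castSucc) :
    (inversionSet (w * adjSwap i)).card + 1 = (inversionSet w).card := by
  have hmem : (i.castSucc, i.succ) ∈ inversionSet w := by simp [mem_inversionSet, hi]
  have hnot : (i.castSucc, i.succ) ∉ inversionSet (w * adjSwap i) := by
    simp [mem_inversionSet, adjSwap_castSucc, adjSwap_succ, hi.le]
  rw [← Finset.card_erase_add_one hmem, add_left_inj, ← Finset.erase_eq_of_notMem hnot]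
  refine Finset.card_equiv ((adjSwap i).prodCongr (adjSwap i)) fun ⟨p, r⟩ => ?_
  simp only [Finset.mem_erase, mem_inversionSet, prodCongr_apply, Prod.map_apply, Perm.mul_apply]
  have := @adjSwap_lt_adjSwap _ i p r
  have := @adjSwap_lt_adjSwap _ i (adjSwap i p) (adjSwap i r)
  have := i.castSucc_lt_succ
  grind [adjSwap_adjSwap, adjSwap_castSucc, adjSwap_succ]

lemma exists_succ_lt_castSucc {w : Perm (Fin (n + 1))} (hw : w ≠ 1) :
    ∃ i : Fin n, w i.succ < w i.castSucc := by
  by_contra! h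
  have hmono : StrictMono w :=
    Fin.strictMono_iff_lt_succ.2 fun i => (h i).lt_of_ne (w.injective.ne i.castSucc_lt_succ.ne)
  refine hw (Equiv.ext fun p => ?_)
  exact DFunLike.congr_fun (Subsingleton.elim (hmono.orderIsoOfSurjective w w.surjective)
    (OrderIso.refl _)) p

lemma card_inversionSet_revPerm :
    (inversionSet (Fin.revPerm : Perm (Fin m))).card = m.choose 2 := by
  simp [inversionSet, Fin.rev_lt_rev, Fintype.card_product_filter_lt]

end Permutations

section RelationOperators

variable {X : Type*} [Fintype X]

open scoped Classical in
/-- The operator `f ↦ (x ↦ ∑ y with R x y, f y)` on real functions on `X`, i.e. the adjacency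
matrix of the relation `R`. -/
noncomputable def relOp (R : X → X → Prop) : End ℝ (EuclideanSpace ℝ X) :=
  Matrix.toEuclideanLin (Matrix.of fun x y => if R x y then 1 else 0)

open scoped Classical in
/-- The characteristic vector of a set of vertices. -/
noncomputable def indicatorVec (C : Finset X) : EuclideanSpace ℝ X :=
  WithLp.toLp 2 fun x => if x ∈ C then 1 else 0

open scoped Classical in
lemma relOp_apply (R : X → X → Prop) (f : EuclideanSpace ℝ X) (x : X) :
    relOp R f x = ∑ y with R x y, f y := by
  simp [relOp, Matrix.mulVec, dotProduct, Finset.sum_filter]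

lemma relOp_congr {R Q : X → X → Prop} (h : ∀ x y, R x y ↔ Q x y) : relOp R = relOp Q := by
  rw [show R = Q from funext₂ fun x y => propext (h x y)]

lemma relOp_eq : relOp (Eq : X → X → Prop) = 1 := by
  classical
  ext f x
  rw [relOp_apply, Finset.sum_filter, Finset.sum_ite_eq, if_pos (Finset.mem_univ x), End.one_apply]

lemma star_relOp (R : X → X → Prop) : star (relOp R) = relOp (flip R) := by
  classical
  rw [LinearMap.star_eq_adjoint, relOp, ← Matrix.toEuclideanLin_conjTranspose_eq_adjoint, relOp]
  rfl

lemma isSymmetric_relOp {R : X → X → Prop} (hR : ∀ x y, R x y → R y x) :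
    (relOp R).IsSymmetric := by
  rw [LinearMap.isSymmetric_iff_isSelfAdjoint, IsSelfAdjoint, star_relOp]
  exact relOp_congr fun x y => ⟨hR y x, hR x y⟩

lemma relOp_eq_mul {Q R S : X → X → Prop} (hQ : ∀ x z, Q x z ↔ ∃ y, R x y ∧ S y z)
    (huniq : ∀ x y y' z, R x y → S y z → R x y' → S y' z → y = y') :
    relOp Q = relOp R * relOp S := by
  classical
  ext f x
  have hunion : Finset.univ.filter (Q x) =
      (Finset.univ.filter (R x)).biUnion fun y => Finset.univ.filter (S y) := by
    ext z
    simp [hQ]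
  have hdisj : ((Finset.univ.filter (R x) : Finset X) : Set X).PairwiseDisjoint
      fun y => Finset.univ.filter (S y) := by
    intro y hy y' hy' hne
    refine Finset.disjoint_left.2 fun z hz hz' => hne ?_
    simp only [Finset.coe_filter_univ, Set.mem_ofPred_eq, Finset.mem_filter_univ] at hy hy' hz hz'
    exact huniq x y y' z hy hz hy' hz'
  simp only [End.mul_apply, relOp_apply]
  rw [← Finset.sum_biUnion hdisj, ← hunion]

lemma relOp_sub_one {R : X → X → Prop} (hR : ∀ x, R x x) :
    relOp R - 1 = relOp fun x y => R x y ∧ x ≠ y := by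
  classical
  ext f x
  calc relOp R f x - f x = ∑ y ∈ (Finset.univ.filter (R x)).erase x, f y := by
        rw [relOp_apply, Finset.sum_erase_eq_sub ((Finset.mem_filter_univ x).2 (hR x))]
    _ = relOp (fun x y => R x y ∧ x ≠ y) f x := by
        rw [relOp_apply]
        congr 1
        ext y
        simp [and_comm, eq_comm]

open scoped Classical in
lemma relOp_mul_self_of_equivalence {R : X → X → Prop} (hR : Equivalence R) {k : ℕ}
    (hk : ∀ x, Finset.card {y | R x y} = k) : relOp R * relOp R = (k : ℝ) • relOp R := by
  ext f x
  have hconst : ∀ y ∈ Finset.univ.filter (R x), relOp R f y = relOp R f x := by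
    intro y hy
    have hxy : R x y := (Finset.mem_filter_univ _).1 hy
    have hclass : R y = R x :=
      funext fun z => propext ⟨hR.trans hxy, hR.trans (hR.symm hxy)⟩
    rw [relOp_apply, relOp_apply, hclass]
  rw [End.mul_apply, relOp_apply, Finset.sum_congr rfl hconst, Finset.sum_const, hk]
  simp

lemma inner_indicatorVec (C : Finset X) (f : EuclideanSpace ℝ X) :
    inner ℝ (indicatorVec C) f = ∑ x ∈ C, f x := by
  simp [indicatorVec, PiLp.inner_apply]

lemma norm_indicatorVec_sq (C : Finset X) : ‖indicatorVec C‖ ^ 2 = C.card := by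
  rw [← real_inner_self_eq_norm_sq, inner_indicatorVec]
  simp [indicatorVec]

lemma inner_indicatorVec_univ (C : Finset X) :
    inner ℝ (indicatorVec Finset.univ) (indicatorVec C) = (C.card : ℝ) := by
  rw [inner_indicatorVec]
  simp [indicatorVec]

open scoped Classical in
lemma relOp_indicatorVec_univ {R : X → X → Prop} {k : ℕ} (hk : ∀ x, Finset.card {y | R x y} = k) :
    relOp R (indicatorVec Finset.univ) = (k : ℝ) • indicatorVec Finset.univ := by
  ext x
  simp [relOp_apply, indicatorVec, hk]

end RelationOperators

section Hoffman

variable {E : Type*} [NormedAddCommGroup E] [InnerProductSpace ℝ E] [FiniteDimensional ℝ E]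

lemma mul_norm_sq_le_inner_of_forall_eigenvalue_ge {T : End ℝ E} (hT : T.IsSymmetric) {c : ℝ}
    (hc : ∀ μ, T.HasEigenvalue μ → c ≤ μ) (v : E) : c * ‖v‖ ^ 2 ≤ inner ℝ v (T v) := by
  let b := hT.eigenvectorBasis rfl
  rw [← real_inner_self_eq_norm_sq, ← b.sum_inner_mul_inner, ← b.sum_inner_mul_inner v (T v),
    Finset.mul_sum]
  refine Finset.sum_le_sum fun i _ => ?_
  have hi : inner ℝ (b i) (T v) = hT.eigenvalues rfl i * inner ℝ (b i) v := by
    rw [← hT, hT.apply_eigenvectorBasis rfl i, inner_smul_left]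
    rfl
  have hle : c ≤ hT.eigenvalues rfl i := hc _ (hT.hasEigenvalue_eigenvalues rfl i)
  rw [hi, real_inner_comm v (b i), mul_left_comm]
  nlinarith [mul_self_nonneg (inner ℝ v (b i))]

lemma mul_norm_sq_le_inner_of_mem {T : End ℝ E} (hT : T.IsSymmetric) {P : Submodule ℝ E}
    (hP : ∀ v ∈ P, T v ∈ P) {c : ℝ} (hc : ∀ v ∈ P, v ≠ 0 → ∀ μ : ℝ, T v = μ • v → c ≤ μ)
    {v : E} (hv : v ∈ P) : c * ‖v‖ ^ 2 ≤ inner ℝ v (T v) := by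
  refine mul_norm_sq_le_inner_of_forall_eigenvalue_ge (hT.restrict_invariant hP) (fun μ hμ => ?_)
    (⟨v, hv⟩ : P)
  obtain ⟨x, hx⟩ := hμ.exists_hasEigenvector
  exact hc x x.2 (by simpa using hx.2) μ (congrArg Subtype.val hx.apply_eq_smul)

lemma inner_apply_ge_of_eigenvector {T : End ℝ E} (hT : T.IsSymmetric) {u : E} {D m : ℝ}
    (hu : T u = D • u)
    (heig : ∀ v, v ≠ 0 → inner ℝ u v = 0 → ∀ μ : ℝ, T v = μ • v → -m ≤ μ) (f : E) :
    -m * (‖u‖ ^ 2 * ‖f‖ ^ 2 - inner ℝ u f ^ 2) ≤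
      ‖u‖ ^ 2 * inner ℝ f (T f) - D * inner ℝ u f ^ 2 := by
  rcases eq_or_ne u 0 with rfl | hu0
  · simp
  have hfu : inner ℝ f u = inner ℝ u f := real_inner_comm _ _
  have huTf : inner ℝ u (T f) = D * inner ℝ u f := by rw [← hT, hu, real_inner_smul_left]
  -- `‖u‖ ^ 2` times the component of `f` orthogonal to `u`
  set v := ‖u‖ ^ 2 • f - (inner ℝ u f : ℝ) • u
  have huv : inner ℝ u v = 0 := by
    simp only [v, inner_sub_right, real_inner_smul_right, real_inner_self_eq_norm_sq]
    ring
  have hvv : ‖v‖ ^ 2 = ‖u‖ ^ 2 * (‖u‖ ^ 2 * ‖f‖ ^ 2 - inner ℝ u f ^ 2) := by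
    rw [← real_inner_self_eq_norm_sq v, ← real_inner_self_eq_norm_sq u,
      ← real_inner_self_eq_norm_sq f]
    simp only [v, inner_sub_right, inner_sub_left, real_inner_smul_right, real_inner_smul_left,
      hfu, ← real_inner_self_eq_norm_sq u]
    ring
  have hvTv : inner ℝ v (T v) =
      ‖u‖ ^ 2 * (‖u‖ ^ 2 * inner ℝ f (T f) - D * inner ℝ u f ^ 2) := by
    simp only [v, inner_sub_right, inner_sub_left, real_inner_smul_right, real_inner_smul_left,
      map_sub, map_smul, hu, hfu, huTf, real_inner_self_eq_norm_sq]
    ring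
  have hbound : -m * ‖v‖ ^ 2 ≤ inner ℝ v (T v) := by
    refine mul_norm_sq_le_inner_of_mem (P := (ℝ ∙ u)ᗮ) hT ?_ ?_ ?_ <;>
      simp only [Submodule.mem_orthogonal_singleton_iff_inner_right]
    · intro w hw
      rw [← hT, hu, real_inner_smul_left, hw, mul_zero]
    · exact fun w hw hw0 μ hμ => heig w hw0 hw μ hμ
    · exact huv
  rw [hvv, hvTv, mul_left_comm] at hbound
  exact le_of_mul_le_mul_left hbound (by positivity)

variable {X : Type*} [Fintype X]

theorem card_mul_le_of_independent {R : X → X → Prop} (hR : ∀ x y, R x y → R y x) {D m : ℝ}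
    (hm : 0 ≤ m) (hD : relOp R (indicatorVec Finset.univ) = D • indicatorVec Finset.univ)
    (heig : ∀ v, v ≠ 0 → inner ℝ (indicatorVec Finset.univ) v = 0 →
      ∀ μ : ℝ, relOp R v = μ • v → -m ≤ μ)
    {C : Finset X} (hC : ∀ x ∈ C, ∀ y ∈ C, ¬ R x y) :
    C.card * (D + m) ≤ m * Fintype.card X := by
  classical
  have hCC : inner ℝ (indicatorVec C) (relOp R (indicatorVec C)) = 0 := by
    rw [inner_indicatorVec]
    refine Finset.sum_eq_zero fun x hx => ?_
    rw [relOp_apply]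
    refine Finset.sum_eq_zero fun y hy => if_neg fun hyC => ?_
    exact hC x hx y hyC ((Finset.mem_filter_univ _).1 hy)
  have hbound := inner_apply_ge_of_eigenvector (isSymmetric_relOp hR) hD heig (indicatorVec C)
  rw [hCC, norm_indicatorVec_sq, norm_indicatorVec_sq, inner_indicatorVec_univ,
    Finset.card_univ] at hbound
  rcases C.eq_empty_or_nonempty with rfl | hne
  · rw [Finset.card_empty, Nat.cast_zero, zero_mul]
    positivity
  · have hpos : (0 : ℝ) < C.card := Nat.cast_pos.2 hne.card_pos
    refine le_of_mul_le_mul_left ?_ hpos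
    linarith

end Hoffman

section HeckeFamilies

variable {S : Type*} [AddCommGroup S] [Module ℝ S] {n : ℕ} {q : ℝ}

/-- Operators satisfying the quadratic and braid relations of the Hecke algebra of type `A_n` with
parameter `q`. The commutation relations between distant generators are left out: all that is drawn
from the relations is the spectrum of the generators and the equality of their determinants. -/
structure IsHeckeFamily (q : ℝ) (T : Fin n → End ℝ S) : Prop where
  quadratic : ∀ i, (T i - q • 1) * (T i + 1) = 0
  braid : ∀ i j : Fin n, (i : ℕ) + 1 = j → T i * T j * T i = T j * T i * T j

lemma finrank_add_sum_finrank_le {k V ι : Type*} [Field k] [AddCommGroup V] [Module k V]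
    [FiniteDimensional k V] [Fintype ι] {K : ι → Submodule k V} (hK : ⨅ i, K i = ⊥) :
    finrank k V + ∑ i, finrank k (K i) ≤ Fintype.card ι * finrank k V := by
  have hker : LinearMap.ker (LinearMap.pi fun i => (K i).mkQ) = ⊥ := by
    simp only [LinearMap.ker_pi, Submodule.ker_mkQ, hK]
  have hle := LinearMap.finrank_le_finrank_of_injective (LinearMap.ker_eq_bot.1 hker)
  rw [finrank_pi_fintype] at hle
  calc finrank k V + ∑ i, finrank k (K i)
      ≤ ∑ i, (finrank k (V ⧸ K i) + finrank k (K i)) := by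
        rw [Finset.sum_add_distrib]
        gcongr
    _ = Fintype.card ι * finrank k V := by
        simp only [Submodule.finrank_quotient_add_finrank, Finset.sum_const, Finset.card_univ,
          smul_eq_mul]

lemma abs_det_of_quadratic [FiniteDimensional ℝ S] (hq : 0 ≤ q) {T : End ℝ S}
    (hT : (T - q • 1) * (T + 1) = 0) : |LinearMap.det T| = q ^ finrank ℝ (T.eigenspace q) := by
  set N := T.eigenspace q
  have hmem {x : S} : x ∈ N ↔ T x = q • x := End.mem_eigenspace_iff
  have hinv : ∀ x ∈ N, T x ∈ N := fun x hx => by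
    rw [hmem.1 hx]
    exact N.smul_mem _ hx
  have hrestrict : T.restrict hinv = q • LinearMap.id := by
    ext x
    simp [hmem.1 x.2]
  have hquot : N.mapQ N T hinv = (-1 : ℝ) • LinearMap.id := by
    ext x
    have hx : T (T x + x) = q • (T x + x) := by
      simpa [sub_eq_zero] using LinearMap.congr_fun hT x
    simp only [LinearMap.comp_apply, Submodule.mkQ_apply, Submodule.mapQ_apply,
      LinearMap.smul_apply, LinearMap.id_apply, neg_one_smul]
    rw [eq_neg_iff_add_eq_zero, ← Submodule.Quotient.mk_add, Submodule.Quotient.mk_eq_zero, hmem]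
    exact hx
  rw [LinearMap.det_eq_det_mul_det N T hinv, hrestrict, hquot]
  simp [abs_mul, abs_of_nonneg hq]

lemma coe_prod_restrict {ι : Type*} {T : ι → End ℝ S} {P : Submodule ℝ S}
    (hP : ∀ i, ∀ v ∈ P, T i v ∈ P) (l : List ι) (v : P) :
    ((l.map fun i => (T i).restrict (hP i)).prod v : S) = (l.map T).prod v := by
  induction l with
  | nil => rfl
  | cons i l ih => simp [ih]

namespace IsHeckeFamily

variable {T : Fin n → End ℝ S}

lemma restrict (hT : IsHeckeFamily q T) {P : Submodule ℝ S} (hP : ∀ i, ∀ v ∈ P, T i v ∈ P) :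
    IsHeckeFamily q fun i => (T i).restrict (hP i) where
  quadratic i := by
    ext v
    simpa using LinearMap.congr_fun (hT.quadratic i) v
  braid i j hij := by
    ext v
    simpa using LinearMap.congr_fun (hT.braid i j hij) v

variable [FiniteDimensional ℝ S]

lemma det_eq_det (hT : IsHeckeFamily q T) (hq : 0 < q) (i j : Fin n) :
    LinearMap.det (T i) = LinearMap.det (T j) := by
  have hne (i : Fin n) : LinearMap.det (T i) ≠ 0 := by
    rw [← abs_pos, abs_det_of_quadratic hq.le (hT.quadratic i)]
    positivity
  have hsucc (i j : Fin n) (hij : (i : ℕ) + 1 = j) : LinearMap.det (T i) = LinearMap.det (T j) := by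
    have h := congrArg LinearMap.det (hT.braid i j hij)
    simp only [map_mul] at h
    refine mul_left_cancel₀ (mul_ne_zero (hne i) (hne j)) ?_
    linarith
  have hzero (k : ℕ) (hk : k < n) :
      LinearMap.det (T ⟨0, k.zero_le.trans_lt hk⟩) = LinearMap.det (T ⟨k, hk⟩) := by
    induction k with
    | zero => rfl
    | succ k ih => exact (ih (by omega)).trans (hsucc _ _ rfl)
  exact (hzero i i.2).symm.trans (hzero j j.2)

lemma finrank_eigenspace_eq (hT : IsHeckeFamily q T) (hq : 1 < q) (i j : Fin n) :
    finrank ℝ ((T i).eigenspace q) = finrank ℝ ((T j).eigenspace q) := by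
  have hq0 : 0 < q := one_pos.trans hq
  refine pow_right_injective₀ hq0 hq.ne' ?_
  simp only [← abs_det_of_quadratic hq0.le (hT.quadratic _), hT.det_eq_det hq0 i j]

lemma abs_det_prod (hT : IsHeckeFamily q T) (hq : 0 ≤ q) {e : ℕ}
    (he : ∀ i, finrank ℝ ((T i).eigenspace q) = e) (l : List (Fin n)) :
    |LinearMap.det (l.map T).prod| = q ^ (l.length * e) := by
  induction l with
  | nil => simp
  | cons i l ih =>
    rw [List.map_cons, List.prod_cons, map_mul, abs_mul, ih,
      abs_det_of_quadratic hq (hT.quadratic i), he, List.length_cons, add_one_mul, pow_add,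
      mul_comm]

lemma abs_pow_mul_le_of_prod_sq_eq [Nontrivial S] (hT : IsHeckeFamily q T) (hq : 1 < q)
    (hfix : ⨅ i, (T i).eigenspace q = ⊥) {l : List (Fin n)} {μ : ℝ}
    (hμ : (l.map T).prod * (l.map T).prod = μ • 1) :
    |μ| ^ n * (q ^ l.length) ^ 2 ≤ ((q ^ l.length) ^ 2) ^ n := by
  obtain ⟨e, he⟩ : ∃ e, ∀ i, finrank ℝ ((T i).eigenspace q) = e := by
    rcases isEmpty_or_nonempty (Fin n) with h | ⟨⟨i⟩⟩
    · exact ⟨0, h.elim⟩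
    · exact ⟨_, fun j => hT.finrank_eigenspace_eq hq j i⟩
  set d := finrank ℝ S
  have hcodim : d + n * e ≤ n * d := by
    simpa [he] using finrank_add_sum_finrank_le hfix
  have hdet : |μ| ^ d = (q ^ l.length) ^ (2 * e) := by
    have h := congrArg (fun f => |LinearMap.det f|) hμ
    simp only [map_mul, abs_mul, hT.abs_det_prod (by linarith) he, LinearMap.det_smul, map_one,
      mul_one, abs_pow] at h
    rw [← h]
    ring
  refine le_of_pow_le_pow_left₀ (finrank_pos (R := ℝ) (M := S)).ne' (by positivity) ?_
  calc (|μ| ^ n * (q ^ l.length) ^ 2) ^ d = (|μ| ^ d) ^ n * (q ^ l.length) ^ (2 * d) := by ring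
    _ = (q ^ l.length) ^ (2 * (d + n * e)) := by rw [hdet]; ring
    _ ≤ (q ^ l.length) ^ (2 * (n * d)) :=
        pow_le_pow_right₀ (one_le_pow₀ hq.le) (by gcongr)
    _ = (((q ^ l.length) ^ 2) ^ n) ^ d := by ring

end IsHeckeFamily

theorem IsHeckeFamily.abs_eigenvalue_pow_mul_le {E : Type*} [NormedAddCommGroup E]
    [InnerProductSpace ℝ E] [FiniteDimensional ℝ E] {T : Fin n → End ℝ E} (hT : IsHeckeFamily q T)
    (hq : 1 < q) (hsymm : ∀ i, (T i).IsSymmetric) {u : E} (hu : ∀ i, T i u = q • u)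
    (hfix : ∀ v, (∀ i, T i v = q • v) → v ∈ Submodule.span ℝ {u}) {l : List (Fin n)}
    (hcomm : ∀ i, Commute (T i) ((l.map T).prod * (l.map T).prod)) {v : E} (hv : v ≠ 0)
    (huv : inner ℝ u v = 0) {μ : ℝ} (hμ : (l.map T).prod v = μ • v) :
    |μ| ^ n * q ^ l.length ≤ (q ^ l.length) ^ n := by
  set A := (l.map T).prod
  let P : Submodule ℝ E := (ℝ ∙ u)ᗮ ⊓ (A * A).eigenspace (μ ^ 2)
  have mem_P {w : E} : w ∈ P ↔ inner ℝ u w = 0 ∧ A (A w) = μ ^ 2 • w :=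
    and_congr Submodule.mem_orthogonal_singleton_iff_inner_right End.mem_eigenspace_iff
  have hvP : v ∈ P := mem_P.2 ⟨huv, by rw [hμ, map_smul, hμ, smul_smul, sq]⟩
  have hTP (i : Fin n) (w : E) (hw : w ∈ P) : T i w ∈ P := by
    obtain ⟨huw, hAw⟩ := mem_P.1 hw
    refine mem_P.2 ⟨by rw [← hsymm, hu, real_inner_smul_left, huw, mul_zero], ?_⟩
    have hcommw := LinearMap.congr_fun (hcomm i).eq w
    simp only [End.mul_apply] at hcommw
    rw [← hcommw, hAw, map_smul]
  have : Nontrivial P := ⟨⟨v, hvP⟩, 0, fun h => hv (congrArg Subtype.val h)⟩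
  have hfixP : ⨅ i, End.eigenspace ((T i).restrict (hTP i)) q = ⊥ := by
    rw [eq_bot_iff]
    intro w hw
    have hwu : (w : E) ∈ Submodule.span ℝ {u} := hfix w fun i => by
      have := End.mem_eigenspace_iff.1 ((Submodule.mem_iInf _).1 hw i)
      exact congrArg Subtype.val this
    exact Subtype.ext (inner_self_eq_zero.1 ((Submodule.mem_orthogonal _ _).1 w.2.1 _ hwu))
  have hsq : (l.map fun i => (T i).restrict (hTP i)).prod *
      (l.map fun i => (T i).restrict (hTP i)).prod = μ ^ 2 • 1 := by
    ext w
    simp only [End.mul_apply, coe_prod_restrict]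
    exact (mem_P.1 w.2).2
  have hbound := (hT.restrict hTP).abs_pow_mul_le_of_prod_sq_eq hq hfixP hsq
  rw [abs_of_nonneg (sq_nonneg μ), ← sq_abs μ] at hbound
  refine le_of_sq_le_sq ?_ (by positivity)
  calc (|μ| ^ n * q ^ l.length) ^ 2 = (|μ| ^ 2) ^ n * (q ^ l.length) ^ 2 := by ring
    _ ≤ ((q ^ l.length) ^ 2) ^ n := hbound
    _ = ((q ^ l.length) ^ n) ^ 2 := by ring

end HeckeFamilies

section Subspaces

variable {K V : Type*} [Field K] [AddCommGroup V] [Module K V]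

lemma finrank_inf_add_le [FiniteDimensional K V] (X : Submodule K V) {W Z : Submodule K V}
    (h : W ≤ Z) : finrank K ↥(X ⊓ Z) + finrank K W ≤ finrank K ↥(X ⊓ W) + finrank K Z := by
  have hsup := Submodule.finrank_sup_add_finrank_inf_eq (X ⊓ Z) W
  have hle : finrank K ↥(X ⊓ Z ⊔ W) ≤ finrank K Z :=
    Submodule.finrank_mono (sup_le inf_le_right h)
  rw [inf_assoc, inf_eq_right.2 h] at hsup
  omega

lemma finrank_inf_lt_finrank_inf [FiniteDimensional K V] {X Y W Z : Submodule K V} (hWZ : W ≤ Z)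
    (hY : Y ≤ X) (hZ : Y ≤ Z) (hW : ¬ Y ≤ W) : finrank K ↥(X ⊓ W) < finrank K ↥(X ⊓ Z) :=
  Submodule.finrank_lt_finrank_of_lt <| (inf_le_inf_left X hWZ).lt_of_ne fun h =>
    hW ((h.symm ▸ le_inf hY hZ : Y ≤ X ⊓ W).trans inf_le_right)

lemma finrank_sup_map_subtype [FiniteDimensional K V] {A D : Submodule K V} (hAD : Disjoint A D)
    (L : Submodule K D) : finrank K ↥(A ⊔ L.map D.subtype) = finrank K A + finrank K L := by
  have hdisj : A ⊓ L.map D.subtype = ⊥ := (hAD.mono_right (Submodule.map_subtype_le D L)).eq_bot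
  have hsum := Submodule.finrank_sup_add_finrank_inf_eq A (L.map D.subtype)
  rwa [hdisj, finrank_bot, add_zero, Submodule.finrank_map_subtype_eq] at hsum

lemma card_submodules_between [Finite K] [FiniteDimensional K V] {A B : Submodule K V}
    (hAB : A ≤ B) (hdim : finrank K B = finrank K A + 2) :
    Nat.card {Y : Submodule K V // A ≤ Y ∧ Y ≤ B ∧ finrank K Y = finrank K A + 1} =
      Nat.card K + 1 := by
  obtain ⟨D, hAD, rfl⟩ := IsModularLattice.exists_disjoint_and_sup_eq hAB
  have hD : finrank K D = 2 := by
    have hsum := Submodule.finrank_sup_add_finrank_inf_eq A D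
    rw [hAD.eq_bot, finrank_bot] at hsum
    omega
  have hright {Y : Submodule K V} (hA : A ≤ Y) (hY : Y ≤ A ⊔ D) :
      A ⊔ (Y.comap D.subtype).map D.subtype = Y := by
    rw [Submodule.map_comap_subtype, ← sup_inf_assoc_of_le D hA, inf_eq_right.2 hY]
  have hleft (L : Submodule K D) : (A ⊔ L.map D.subtype).comap D.subtype = L := by
    refine Submodule.map_injective_of_injective D.subtype_injective ?_
    rw [Submodule.map_comap_subtype, inf_comm, sup_comm,
      sup_inf_assoc_of_le A (Submodule.map_subtype_le D L), hAD.eq_bot, sup_bot_eq]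
  rw [← Projectivization.card_of_finrank_two K D hD,
    Nat.card_congr (Projectivization.equivSubmodule K D)]
  refine Nat.card_congr
    { toFun Y := ⟨Y.1.comap D.subtype, ?_⟩
      invFun L := ⟨A ⊔ L.1.map D.subtype, le_sup_left,
        sup_le_sup_left (Submodule.map_subtype_le D L.1) A, ?_⟩
      left_inv Y := Subtype.ext (hright Y.2.1 Y.2.2.1)
      right_inv L := Subtype.ext (hleft L.1) }
  · have hY := finrank_sup_map_subtype hAD (Y.1.comap D.subtype)
    rw [hright Y.2.1 Y.2.2.1, Y.2.2.2] at hY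
    omega
  · rw [finrank_sup_map_subtype hAD, L.2]

end Subspaces

namespace CompleteFlag

variable {F : Type} [Field F] {n : ℕ}

/-- The `k`-dimensional member of a flag, with the trivial members in dimensions `0` and `n + 1`
included so that the members are indexed by their dimension; beyond `n + 1` it is `⊤`. -/
def space (G : CompleteFlag F n) : ℕ → Submodule F (Fin (n + 1) → F)
  | 0 => ⊥
  | k + 1 => if h : k < n then G.U ⟨k, h⟩ else ⊤

/-- Flags in a common panel of type `i`: all their members agree, except perhaps those of dimension
`i + 1`. -/
def Adj (i : Fin n) (G H : CompleteFlag F n) : Prop :=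
  ∀ k : ℕ, k ≠ i + 1 → G.space k = H.space k

lemma space_zero (G : CompleteFlag F n) : G.space 0 = ⊥ := rfl

lemma space_succ (G : CompleteFlag F n) {k : ℕ} (hk : k < n) : G.space (k + 1) = G.U ⟨k, hk⟩ :=
  dif_pos hk

lemma space_eq_top (G : CompleteFlag F n) {k : ℕ} (hk : n < k) : G.space k = ⊤ := by
  obtain ⟨k, rfl⟩ := Nat.exists_eq_succ_of_ne_zero (Nat.ne_zero_of_lt hk)
  exact dif_neg (by omega)

lemma space_mono (G : CompleteFlag F n) : Monotone G.space := by
  refine monotone_nat_of_le_succ fun k => ?_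
  rcases k with _ | k
  · exact bot_le
  · rcases lt_or_ge (k + 1) n with hk | hk
    · rw [space_succ G hk, space_succ G (by omega : k < n)]
      exact G.mono (Nat.le_succ k)
    · rw [G.space_eq_top (by omega : n < k + 1 + 1)]
      exact le_top

lemma finrank_space (G : CompleteFlag F n) {k : ℕ} (hk : k ≤ n + 1) :
    finrank F (G.space k) = k := by
  rcases k with _ | k
  · exact finrank_bot F _
  · rcases lt_or_ge k n with hkn | hkn
    · rw [space_succ G hkn, G.dim]
    · rw [G.space_eq_top (by omega), finrank_top, finrank_fin_fun]
      omega

lemma ext_space {G H : CompleteFlag F n} (h : ∀ k, G.space k = H.space k) : G = H := by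
  have hU : G.U = H.U := by
    funext i
    rw [← G.space_succ i.2, h, H.space_succ i.2]
  cases G
  cases H
  cases hU
  rfl

lemma eq_space_of_le {G : CompleteFlag F n} {k : ℕ} (hk : k ≤ n + 1)
    {Y : Submodule F (Fin (n + 1) → F)} (hle : Y ≤ G.space k) (hY : finrank F Y = k) :
    Y = G.space k :=
  Submodule.eq_of_le_of_finrank_eq hle (by rw [hY, finrank_space G hk])

instance [Finite F] : Finite (CompleteFlag F n) :=
  Finite.of_injective U fun G H h => by
    cases G
    cases H
    cases h
    rfl

noncomputable instance [Finite F] : Fintype (CompleteFlag F n) := Fintype.ofFinite _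

lemma adj_equivalence (i : Fin n) : Equivalence (Adj i : CompleteFlag F n → CompleteFlag F n → Prop)
    where
  refl _ _ _ := rfl
  symm h k hk := (h k hk).symm
  trans h h' k hk := (h k hk).trans (h' k hk)

lemma Adj.symm {i : Fin n} {G H : CompleteFlag F n} (h : Adj i G H) : Adj i H G :=
  (adj_equivalence i).symm h

lemma Adj.trans {i : Fin n} {G H K : CompleteFlag F n} (h : Adj i G H) (h' : Adj i H K) :
    Adj i G K := (adj_equivalence i).trans h h'

lemma Adj.eq_of_space_eq {i : Fin n} {G H : CompleteFlag F n} (h : Adj i G H)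
    (hi : G.space (i + 1) = H.space (i + 1)) : G = H :=
  ext_space fun k => if hk : k = i + 1 then hk ▸ hi else h k hk

lemma exists_adj_space_eq (G : CompleteFlag F n) (i : Fin n) {Y : Submodule F (Fin (n + 1) → F)}
    (hle : G.space i ≤ Y) (hge : Y ≤ G.space (i + 2)) (hY : finrank F Y = i + 1) :
    ∃ H : CompleteFlag F n, Adj i G H ∧ H.space (i + 1) = Y := by
  classical
  have hU (j : Fin n) : G.U j = G.space (j + 1) := (G.space_succ j.2).symm
  refine ⟨⟨Function.update G.U i Y, fun j => ?_, fun j k hjk => ?_⟩, fun k hk => ?_, ?_⟩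
  · rcases eq_or_ne j i with rfl | hj
    · rw [Function.update_self, hY]
    · rw [Function.update_of_ne hj, G.dim]
  · rcases hjk.eq_or_lt with rfl | hlt
    · rfl
    rcases eq_or_ne j i with rfl | hj
    · rw [Function.update_self, Function.update_of_ne hlt.ne', hU]
      exact hge.trans (G.space_mono (by omega))
    rcases eq_or_ne k i with rfl | hk
    · rw [Function.update_self, Function.update_of_ne hj, hU]
      exact (G.space_mono (by omega)).trans hle
    · rw [Function.update_of_ne hj, Function.update_of_ne hk]
      exact G.mono hjk
  · rcases k with _ | k
    · rfl
    rcases lt_or_ge k n with hkn | hkn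
    · have hki : (⟨k, hkn⟩ : Fin n) ≠ i := fun h => hk (by rw [← h])
      rw [space_succ _ hkn, space_succ _ hkn]
      exact (Function.update_of_ne hki Y G.U).symm
    · rw [space_eq_top _ (by omega), space_eq_top _ (by omega)]
  · rw [space_succ _ i.2]
    exact Function.update_self ..

open scoped Classical in
lemma card_adj [Finite F] (i : Fin n) (G : CompleteFlag F n) :
    Finset.card {H | Adj i G H} = Nat.card F + 1 := by
  have hdim := G.finrank_space (k := i) (by omega)
  have hdim2 := G.finrank_space (k := i + 2) (by omega)
  rw [← card_submodules_between (G.space_mono (by omega : (i : ℕ) ≤ i + 2)) (by omega),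
    ← Fintype.card_subtype, ← Nat.card_eq_fintype_card]
  refine Nat.card_congr (Equiv.ofBijective (fun H => ⟨H.1.space (i + 1), ?_, ?_, ?_⟩) ⟨?_, ?_⟩)
  · rw [H.2 i (by omega)]
    exact H.1.space_mono (by omega)
  · rw [H.2 (i + 2) (by omega)]
    exact H.1.space_mono (by omega)
  · rw [hdim, H.1.finrank_space (by omega)]
  · intro H K hHK
    exact Subtype.ext ((H.2.symm.trans K.2).eq_of_space_eq (congrArg Subtype.val hHK))
  · rintro ⟨Y, hle, hge, hY⟩
    obtain ⟨H, hH, hHY⟩ := G.exists_adj_space_eq i hle hge (by rw [hY, hdim])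
    exact ⟨⟨H, hH⟩, Subtype.ext hHY⟩

lemma exists_adj_space_succ_le {G H : CompleteFlag F n} {k m : ℕ} (hkn : k ≤ n) (hmk : m < k)
    (hGH : G.space (k + 1) = H.space (k + 1)) (hm : G.space m ≤ H.space k) :
    ∃ K, Adj ⟨m, hmk.trans_le hkn⟩ G K ∧ K.space (m + 1) ≤ H.space k := by
  by_cases hm1 : G.space (m + 1) ≤ H.space k
  · exact ⟨G, (adj_equivalence _).refl G, hm1⟩
  have hm2 : G.space (m + 2) ≤ H.space (k + 1) := hGH ▸ G.space_mono (by omega)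
  have hm12 : G.space (m + 1) ≤ G.space (m + 2) := G.space_mono (by omega)
  have hdim : finrank F ↥(G.space (m + 2) ⊓ H.space k) = m + 1 := by
    have hge := finrank_inf_add_le (G.space (m + 2)) (H.space_mono k.le_succ)
    have hlt : finrank F ↥(G.space (m + 2) ⊓ H.space k) <
        finrank F ↥(G.space (m + 2) ⊓ H.space (k + 1)) :=
      finrank_inf_lt_finrank_inf (H.space_mono k.le_succ) hm12 (hm12.trans hm2) hm1
    rw [inf_eq_left.2 hm2, finrank_space _ (by omega)] at hge hlt
    rw [finrank_space _ (by omega), finrank_space _ (by omega)] at hge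
    omega
  obtain ⟨K, hK, hKY⟩ := G.exists_adj_space_eq ⟨m, hmk.trans_le hkn⟩
    (le_inf (G.space_mono (m.le_add_right 2)) hm) inf_le_left hdim
  exact ⟨K, hK, hKY.trans_le inf_le_right⟩

/-- Flags joined by a gallery, i.e. by a chain of flags in which consecutive ones lie in a common
panel. -/
def Joined (G H : CompleteFlag F n) : Prop :=
  Relation.ReflTransGen (fun G H => ∃ i, Adj i G H) G H

lemma exists_joined_space_le {G H : CompleteFlag F n} {k : ℕ} (hkn : k ≤ n)
    (hGH : ∀ j > k, G.space j = H.space j) {m : ℕ} (hmk : m ≤ k) :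
    ∃ K, Joined G K ∧ (∀ j > k, K.space j = H.space j) ∧ K.space m ≤ H.space k := by
  induction m with
  | zero => exact ⟨G, .refl, hGH, bot_le⟩
  | succ m ih =>
    obtain ⟨K, hGK, hKH, hm⟩ := ih (by omega)
    obtain ⟨L, hKL, hL⟩ := exists_adj_space_succ_le hkn hmk (hKH _ k.lt_succ_self) hm
    exact ⟨L, hGK.tail ⟨_, hKL⟩, fun j hj => by rw [← hKL j (by simp; omega), hKH j hj], hL⟩

lemma joined_of_forall_gt {k : ℕ} (hkn : k ≤ n) {G H : CompleteFlag F n}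
    (hGH : ∀ j > k, G.space j = H.space j) : Joined G H := by
  induction k generalizing G with
  | zero =>
    rw [ext_space fun j => j.eq_zero_or_pos.elim (fun h => h ▸ rfl) (hGH j)]
    exact .refl
  | succ k ih =>
    obtain ⟨K, hGK, hKH, hle⟩ := exists_joined_space_le hkn hGH le_rfl
    have hk := eq_space_of_le (by omega) hle (K.finrank_space (by omega))
    refine hGK.trans (ih (by omega) fun j hj => ?_)
    rcases (Nat.succ_le_of_lt hj).eq_or_lt with rfl | hj
    exacts [hk, hKH j hj]

lemma joined (G H : CompleteFlag F n) : Joined G H :=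
  joined_of_forall_gt le_rfl fun _ hj => by rw [space_eq_top _ hj, space_eq_top _ hj]

/-- The pair `(G, H)` is in relative position `w`: its intersection dimensions are those of the two
standard flags spanned by the initial segments of `(e_j)` and of `(e_{w j})`. -/
def InPos (w : Perm (Fin (n + 1))) (G H : CompleteFlag F n) : Prop :=
  ∀ x y : ℕ, x ≤ n + 1 → y ≤ n + 1 → finrank F ↥(G.space y ⊓ H.space x) = cornerRank w x y

/-- The conditions of `InPos w G H` which do not involve the member of `H` of dimension `i + 1`. -/
def InPosOff (i : Fin n) (w : Perm (Fin (n + 1))) (G H : CompleteFlag F n) : Prop :=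
  ∀ x y : ℕ, x ≤ n + 1 → y ≤ n + 1 → x ≠ i + 1 →
    finrank F ↥(G.space y ⊓ H.space x) = cornerRank w x y

lemma inPos_inv_iff {w : Perm (Fin (n + 1))} {G H : CompleteFlag F n} :
    InPos w⁻¹ G H ↔ InPos w H G := by
  simp only [InPos, cornerRank_inv]
  refine forall_comm.trans (forall₂_congr fun y x => ?_)
  rw [inf_comm]
  exact forall_comm

lemma inPos_one_iff {G H : CompleteFlag F n} : InPos 1 G H ↔ G = H := by
  constructor
  · intro h
    refine ext_space fun k => ?_
    rcases le_or_gt k (n + 1) with hk | hk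
    · have hdim := h k k hk hk
      rw [cornerRank_one hk, min_self] at hdim
      rw [← eq_space_of_le hk inf_le_left hdim, eq_space_of_le hk inf_le_right hdim]
    · rw [space_eq_top _ (by omega), space_eq_top _ (by omega)]
  · rintro rfl x y hx hy
    rw [cornerRank_one hx, ← G.space_mono.map_inf, finrank_space _ (by omega), inf_comm]

lemma opposite_iff_forall_space {G H : CompleteFlag F n} :
    G.Opposite H ↔ ∀ k ≤ n + 1, G.space k ⊓ H.space (n + 1 - k) = ⊥ := by
  have hmember (i : Fin n) : G.U i ⊓ H.U i.rev = G.space (i + 1) ⊓ H.space (n + 1 - (i + 1)) := by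
    rw [space_succ _ i.2, show n + 1 - ((i : ℕ) + 1) = i.rev + 1 by rw [Fin.val_rev]; omega,
      space_succ _ i.rev.2]
  constructor
  · intro h k hk
    rcases k with _ | k
    · exact bot_inf_eq _
    rcases hk.eq_or_lt with hk | hk
    · rw [hk, Nat.sub_self, space_zero, inf_bot_eq]
    · exact (hmember ⟨k, by omega⟩).symm.trans (h _)
  · exact fun h i => (hmember i).trans (h _ (by omega))

lemma inPos_revPerm_iff {G H : CompleteFlag F n} : InPos Fin.revPerm G H ↔ G.Opposite H := by
  rw [opposite_iff_forall_space]
  constructor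
  · intro h k hk
    rw [← Submodule.finrank_eq_zero (R := F), h (n + 1 - k) k (by omega) hk,
      cornerRank_revPerm (by omega) hk]
    omega
  · intro h x y hx hy
    rw [cornerRank_revPerm hx hy]
    have hsum := Submodule.finrank_sup_add_finrank_inf_eq (G.space y) (H.space x)
    have hle : finrank F ↥(G.space y ⊔ H.space x) ≤ n + 1 :=
      (Submodule.finrank_le _).trans_eq (finrank_fin_fun F)
    rw [finrank_space _ hx, finrank_space _ hy] at hsum
    have hbot := h y hy
    rcases le_total x (n + 1 - y) with hxy | hxy
    · have : G.space y ⊓ H.space x = ⊥ :=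
        eq_bot_iff.2 ((inf_le_inf_left _ (H.space_mono hxy)).trans hbot.le)
      rw [this, finrank_bot]
      omega
    · have hadd := finrank_inf_add_le (G.space y) (H.space_mono hxy)
      rw [hbot, finrank_bot, finrank_space _ (by omega), finrank_space _ hx] at hadd
      omega

lemma Opposite.symm {G H : CompleteFlag F n} (h : G.Opposite H) : H.Opposite G :=
  inPos_revPerm_iff.1 (inPos_inv_iff.1 (inPos_revPerm_iff.2 h))

section Projection

variable {w : Perm (Fin (n + 1))} {i : Fin n} {G H K : CompleteFlag F n}

lemma InPos.inPosOff (h : InPos w G H) : InPosOff i w G H := fun x y hx hy _ => h x y hx hy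

lemma inPosOff_mul_adjSwap_iff : InPosOff i (w * adjSwap i) G H ↔ InPosOff i w G H :=
  forall₅_congr fun x y _ _ hx => by rw [cornerRank_mul_adjSwap w hx]

lemma InPosOff.of_adj (h : InPosOff i w G H) (hHK : Adj i H K) : InPosOff i w G K :=
  fun x y hx hy hxi => hHK x hxi ▸ h x y hx hy hxi

lemma InPosOff.inPos_iff (h : InPosOff i w G H) :
    InPos w G H ↔
      ∀ y ≤ n + 1, finrank F ↥(G.space y ⊓ H.space (i + 1)) = cornerRank w (i + 1) y :=
  ⟨fun hw y => hw (i + 1) y (by omega), fun hi x y hx hy =>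
    if hxi : x = i + 1 then hxi ▸ hi y hy else h x y hx hy hxi⟩

lemma finrank_inf_space_add_one_bounds (i : Fin n) (G H : CompleteFlag F n) (y : ℕ) :
    finrank F ↥(G.space y ⊓ H.space i) ≤ finrank F ↥(G.space y ⊓ H.space (i + 1)) ∧
    finrank F ↥(G.space y ⊓ H.space (i + 1)) ≤ finrank F ↥(G.space y ⊓ H.space i) + 1 ∧
    finrank F ↥(G.space y ⊓ H.space (i + 1)) ≤ finrank F ↥(G.space y ⊓ H.space (i + 2)) ∧
    finrank F ↥(G.space y ⊓ H.space (i + 2)) ≤ finrank F ↥(G.space y ⊓ H.space (i + 1)) + 1 := by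
  have hle : H.space i ≤ H.space (i + 1) := H.space_mono (by omega)
  have hle' : H.space (i + 1) ≤ H.space (i + 2) := H.space_mono (by omega)
  have hadd := finrank_inf_add_le (G.space y) hle
  have hadd' := finrank_inf_add_le (G.space y) hle'
  rw [H.finrank_space (by omega), H.finrank_space (by omega)] at hadd hadd'
  exact ⟨Submodule.finrank_mono (inf_le_inf_left _ hle), by omega,
    Submodule.finrank_mono (inf_le_inf_left _ hle'), by omega⟩

/-- With `a = w i`, the intersection `G_{a+1} ∩ H_{i+2}`. When `w i < w (i + 1)` it is the part of
`H_{i+2}` that the member `H_{i+1}` has to contain for `H` to be the projection of `G` to its panel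
of type `i`. -/
def projPart (i : Fin n) (w : Perm (Fin (n + 1))) (G H : CompleteFlag F n) :
    Submodule F (Fin (n + 1) → F) :=
  G.space (w i.castSucc + 1) ⊓ H.space (i + 2)

lemma projPart_congr (hHK : Adj i H K) : projPart i w G H = projPart i w G K := by
  rw [projPart, hHK _ (by omega), projPart]

lemma InPosOff.finrank_projPart (h : InPosOff i w G H) (hw : w i.castSucc < w i.succ) :
    finrank F ↥(projPart i w G H) = cornerRank w i (w i.castSucc + 1) + 1 := by
  rw [projPart, h _ _ (by omega) (by omega) (by omega), cornerRank_add_two, if_pos (by omega),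
    if_neg (by rw [Fin.lt_def] at hw; omega)]

lemma InPosOff.finrank_sup_projPart (h : InPosOff i w G H) (hw : w i.castSucc < w i.succ) :
    finrank F ↥(H.space i ⊔ projPart i w G H) = i + 1 := by
  have hsum := Submodule.finrank_sup_add_finrank_inf_eq (H.space i) (projPart i w G H)
  have hinf : H.space i ⊓ projPart i w G H = G.space (w i.castSucc + 1) ⊓ H.space i := by
    rw [projPart, inf_left_comm, inf_eq_left.2 (H.space_mono (by omega))]
  rw [h.finrank_projPart hw, hinf, h _ _ (by omega) (by omega) (by omega),
    H.finrank_space (by omega)] at hsum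
  omega

lemma InPosOff.not_projPart_le (h : InPosOff i w G H) (hw : w i.castSucc < w i.succ) :
    ¬ projPart i w G H ≤ H.space i := fun hle => by
  have hdim := h.finrank_sup_projPart hw
  rw [sup_eq_left.2 hle, H.finrank_space (by omega)] at hdim
  omega

lemma InPosOff.finrank_lt_of_projPart_le (h : InPosOff i w G H) (hw : w i.castSucc < w i.succ)
    (hle : projPart i w G H ≤ H.space (i + 1)) {y : ℕ} (hy : (w i.castSucc : ℕ) < y) :
    finrank F ↥(G.space y ⊓ H.space i) < finrank F ↥(G.space y ⊓ H.space (i + 1)) :=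
  finrank_inf_lt_finrank_inf (H.space_mono (by omega))
    (inf_le_left.trans (G.space_mono hy)) hle (h.not_projPart_le hw)

lemma finrank_lt_of_not_projPart_le (hle : ¬ projPart i w G H ≤ H.space (i + 1)) {y : ℕ}
    (hy : (w i.castSucc : ℕ) < y) :
    finrank F ↥(G.space y ⊓ H.space (i + 1)) < finrank F ↥(G.space y ⊓ H.space (i + 2)) :=
  finrank_inf_lt_finrank_inf (H.space_mono (by omega))
    (inf_le_left.trans (G.space_mono hy)) inf_le_right hle

lemma InPosOff.inPos_iff_projPart_le (h : InPosOff i w G H) (hw : w i.castSucc < w i.succ) :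
    InPos w G H ↔ projPart i w G H ≤ H.space (i + 1) := by
  constructor
  · intro hpos
    by_contra hle
    have hlt := finrank_lt_of_not_projPart_le hle (Nat.lt_succ_self _)
    rw [hpos _ _ (by omega) (by omega), hpos _ _ (by omega) (by omega), cornerRank_add_one,
      cornerRank_add_two] at hlt
    rw [Fin.lt_def] at hw
    grind
  · intro hle
    refine h.inPos_iff.2 fun y hy => ?_
    have hlt := h.finrank_lt_of_projPart_le hw hle (y := y)
    have hbounds := finrank_inf_space_add_one_bounds i G H y
    rw [h i y (by omega) hy (by omega), h (i + 2) y (by omega) hy (by omega),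
      cornerRank_add_two] at hbounds
    rw [h i y (by omega) hy (by omega)] at hlt
    rw [Fin.lt_def] at hw
    rw [cornerRank_add_one]
    grind

lemma InPosOff.inPos_mul_adjSwap_iff (h : InPosOff i w G H) (hw : w i.castSucc < w i.succ) :
    InPos (w * adjSwap i) G H ↔ ¬ projPart i w G H ≤ H.space (i + 1) := by
  constructor
  · intro hpos hle
    have hlt := h.finrank_lt_of_projPart_le hw hle (Nat.lt_succ_self _)
    rw [h _ _ (by omega) (by omega) (by omega), hpos _ _ (by omega) (by omega),
      cornerRank_mul_adjSwap_add_one] at hlt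
    rw [Fin.lt_def] at hw
    grind
  · intro hle
    refine (inPosOff_mul_adjSwap_iff.2 h).inPos_iff.2 fun y hy => ?_
    have hlt := finrank_lt_of_not_projPart_le hle (y := y)
    have hbounds := finrank_inf_space_add_one_bounds i G H y
    rw [h (i + 2) y (by omega) hy (by omega), cornerRank_add_two] at hlt hbounds
    rw [h i y (by omega) hy (by omega)] at hbounds
    rw [Fin.lt_def] at hw
    rw [cornerRank_mul_adjSwap_add_one]
    grind

lemma InPos.eq_of_adj (hw : w i.castSucc < w i.succ) (hH : InPos w G H) (hK : InPos w G K)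
    (hHK : Adj i H K) : H = K := by
  have hspace {L : CompleteFlag F n} (hL : InPos w G L) :
      L.space i ⊔ projPart i w G L = L.space (i + 1) :=
    eq_space_of_le (by omega)
      (sup_le (L.space_mono (by omega)) ((hL.inPosOff.inPos_iff_projPart_le hw).1 hL))
      (hL.inPosOff.finrank_sup_projPart hw)
  refine hHK.eq_of_space_eq ?_
  rw [← hspace hH, ← hspace hK, hHK i (by omega), projPart_congr hHK]

lemma InPosOff.exists_adj_inPos (h : InPosOff i w G H) (hw : w i.castSucc < w i.succ) :
    ∃ K, Adj i H K ∧ InPos w G K := by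
  obtain ⟨K, hHK, hK⟩ := H.exists_adj_space_eq i (Y := H.space i ⊔ projPart i w G H) le_sup_left
    (sup_le (H.space_mono (by omega)) inf_le_right) (h.finrank_sup_projPart hw)
  refine ⟨K, hHK, ((h.of_adj hHK).inPos_iff_projPart_le hw).2 ?_⟩
  rw [← projPart_congr hHK, hK]
  exact le_sup_right

lemma inPos_mul_adjSwap_iff_exists (hw : w i.castSucc < w i.succ) :
    InPos (w * adjSwap i) G H ↔ ∃ K, InPos w G K ∧ Adj i K H ∧ K ≠ H := by
  have hcompl (h : InPosOff i w G H) : InPos (w * adjSwap i) G H ↔ ¬ InPos w G H := by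
    rw [h.inPos_iff_projPart_le hw, h.inPos_mul_adjSwap_iff hw]
  constructor
  · intro hpos
    have hoff := inPosOff_mul_adjSwap_iff.1 hpos.inPosOff
    obtain ⟨K, hHK, hK⟩ := hoff.exists_adj_inPos hw
    exact ⟨K, hK, hHK.symm, fun hKH => (hcompl hoff).1 hpos (hKH ▸ hK)⟩
  · rintro ⟨K, hK, hKH, hne⟩
    exact (hcompl (hK.inPosOff.of_adj hKH)).2 fun hH => hne (hK.eq_of_adj hw hH hKH)

end Projection

section Operators

variable [Finite F]

/-- The generator `T_i` of the Hecke algebra: the adjacency operator of the graph whose edges join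
distinct flags of a common panel of type `i`. -/
noncomputable def hecke (F : Type) [Field F] [Finite F] (i : Fin n) :
    End ℝ (EuclideanSpace ℝ (CompleteFlag F n)) :=
  relOp fun G H => Adj i G H ∧ G ≠ H

/-- The basis element `T_w` of the Hecke algebra: the adjacency operator of the relation of being in
relative position `w`. -/
noncomputable def posOp (F : Type) [Field F] [Finite F] (w : Perm (Fin (n + 1))) :
    End ℝ (EuclideanSpace ℝ (CompleteFlag F n)) :=
  relOp (InPos w)

lemma relOp_adj (i : Fin n) :
    relOp (Adj i : CompleteFlag F n → CompleteFlag F n → Prop) = hecke F i + 1 :=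
  sub_eq_iff_eq_add.1 (relOp_sub_one (adj_equivalence i).refl)

lemma isSymmetric_hecke (i : Fin n) : (hecke F i).IsSymmetric :=
  isSymmetric_relOp fun _ _ h => ⟨h.1.symm, h.2.symm⟩

lemma hecke_quadratic (i : Fin n) :
    (hecke F i - (Nat.card F : ℝ) • 1) * (hecke F i + 1) = 0 := by
  have hsq := relOp_mul_self_of_equivalence (adj_equivalence i) (card_adj (F := F) i)
  rw [Nat.cast_add_one, relOp_adj] at hsq
  calc (hecke F i - (Nat.card F : ℝ) • 1) * (hecke F i + 1)
      = (hecke F i + 1) * (hecke F i + 1) - ((Nat.card F : ℝ) + 1) • (hecke F i + 1) := by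
        simp only [add_mul, sub_mul, add_smul, one_smul, one_mul, smul_mul_assoc]
        abel
    _ = 0 := sub_eq_zero.2 hsq

lemma hecke_indicatorVec_univ (i : Fin n) :
    hecke F i (indicatorVec Finset.univ) = (Nat.card F : ℝ) • indicatorVec Finset.univ := by
  have h := relOp_indicatorVec_univ (card_adj (F := F) i)
  rwa [relOp_adj, LinearMap.add_apply, End.one_apply, Nat.cast_add_one, add_smul, one_smul,
    add_left_inj] at h

lemma eq_of_forall_hecke_eq_smul {v : EuclideanSpace ℝ (CompleteFlag F n)}
    (hv : ∀ i, hecke F i v = (Nat.card F : ℝ) • v) (G H : CompleteFlag F n) : v G = v H := by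
  have hadj (i : Fin n) (G H : CompleteFlag F n) (hGH : Adj i G H) : v G = v H := by
    have hpanel : relOp (Adj i) v = ((Nat.card F : ℝ) + 1) • v := by
      rw [relOp_adj, LinearMap.add_apply, hv, End.one_apply, add_smul, one_smul]
    have hclass : Adj i G = Adj i H :=
      funext fun K => propext ⟨hGH.symm.trans, hGH.trans⟩
    have hG : relOp (Adj i) v G = relOp (Adj i) v H := by rw [relOp_apply, relOp_apply, hclass]
    rw [hpanel] at hG
    exact mul_left_cancel₀ (by positivity) hG
  induction joined G H with
  | refl => rfl
  | tail _ hKL ih => exact ih.trans (hKL.elim fun i => hadj i _ _)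

lemma mem_span_of_forall_hecke_eq_smul {v : EuclideanSpace ℝ (CompleteFlag F n)}
    (hv : ∀ i, hecke F i v = (Nat.card F : ℝ) • v) :
    v ∈ Submodule.span ℝ {indicatorVec Finset.univ} := by
  rw [Submodule.mem_span_singleton]
  rcases isEmpty_or_nonempty (CompleteFlag F n) with h | ⟨⟨G⟩⟩
  · exact ⟨0, Subsingleton.elim _ _⟩
  · exact ⟨v G, by ext H; simp [indicatorVec, eq_of_forall_hecke_eq_smul hv G H]⟩

lemma star_posOp (w : Perm (Fin (n + 1))) : star (posOp F w) = posOp F w⁻¹ := by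
  rw [posOp, star_relOp]
  exact relOp_congr fun G H => inPos_inv_iff.symm

lemma posOp_one : posOp F (1 : Perm (Fin (n + 1))) = 1 := by
  rw [← relOp_eq]
  exact relOp_congr fun G H => inPos_one_iff

lemma posOp_mul_adjSwap {w : Perm (Fin (n + 1))} {i : Fin n} (hw : w i.castSucc < w i.succ) :
    posOp F (w * adjSwap i) = posOp F w * hecke F i :=
  relOp_eq_mul (fun _ _ => inPos_mul_adjSwap_iff_exists hw) fun _ _ _ _ hK hKH hK' hKH' =>
    hK.eq_of_adj hw hK' (hKH.1.trans hKH'.1.symm)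

lemma posOp_adjSwap (i : Fin n) : posOp F (adjSwap i) = hecke F i := by
  rw [← one_mul (adjSwap i), posOp_mul_adjSwap i.castSucc_lt_succ, posOp_one, one_mul]

lemma posOp_adjSwap_mul {w : Perm (Fin (n + 1))} {i : Fin n}
    (hw : w⁻¹ i.castSucc < w⁻¹ i.succ) :
    posOp F (adjSwap i * w) = hecke F i * posOp F w := by
  refine star_injective ?_
  rw [star_mul, star_posOp, star_posOp, mul_inv_rev, adjSwap_inv, posOp_mul_adjSwap hw,
    ← posOp_adjSwap, star_posOp, adjSwap_inv]

lemma hecke_braid {i j : Fin n} (hij : (i : ℕ) + 1 = j) :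
    hecke F i * hecke F j * hecke F i = hecke F j * hecke F i * hecke F j := by
  have hlt {w : Perm (Fin (n + 1))} {k : Fin n} (h : (w k.castSucc : ℕ) < w k.succ) :
      w k.castSucc < w k.succ := h
  have hiji : posOp F (adjSwap i * adjSwap j * adjSwap i) =
      hecke F i * hecke F j * hecke F i := by
    rw [posOp_mul_adjSwap, posOp_mul_adjSwap, posOp_adjSwap] <;> refine hlt ?_ <;>
      simp only [Perm.mul_apply, val_adjSwap, Fin.val_castSucc, Fin.val_succ] <;> grind
  have hjij : posOp F (adjSwap j * adjSwap i * adjSwap j) =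
      hecke F j * hecke F i * hecke F j := by
    rw [posOp_mul_adjSwap, posOp_mul_adjSwap, posOp_adjSwap] <;> refine hlt ?_ <;>
      simp only [Perm.mul_apply, val_adjSwap, Fin.val_castSucc, Fin.val_succ] <;> grind
  rw [← hiji, adjSwap_braid hij, hjij]

lemma isHeckeFamily_hecke : IsHeckeFamily (Nat.card F) (fun i : Fin n => hecke F i) where
  quadratic := hecke_quadratic
  braid _ _ := hecke_braid

lemma exists_posOp_eq_prod (w : Perm (Fin (n + 1))) :
    ∃ l : List (Fin n), l.length = (inversionSet w).card ∧
      posOp F w = (l.map fun i => hecke F i).prod := by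
  induction hk : (inversionSet w).card using Nat.strong_induction_on generalizing w with
  | _ k ih =>
  rcases eq_or_ne w 1 with rfl | hw
  · exact ⟨[], by rw [← hk, inversionSet_one, Finset.card_empty, List.length_nil], posOp_one⟩
  · obtain ⟨i, hi⟩ := exists_succ_lt_castSucc hw
    have hcard := card_inversionSet_mul_adjSwap hi
    obtain ⟨l, hl, hprod⟩ := ih _ (by omega) (w * adjSwap i) rfl
    have hasc : (w * adjSwap i) i.castSucc < (w * adjSwap i) i.succ := by
      rwa [Perm.mul_apply, Perm.mul_apply, adjSwap_castSucc, adjSwap_succ]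
    refine ⟨l ++ [i], by rw [List.length_append, hl, List.length_singleton, hcard, hk], ?_⟩
    rw [List.map_append, List.prod_append, ← hprod, List.map_singleton, List.prod_singleton,
      ← posOp_mul_adjSwap hasc, mul_assoc, adjSwap_mul_self, mul_one]

lemma hecke_rev_mul_posOp_revPerm (i : Fin n) :
    hecke F i.rev * posOp F Fin.revPerm = posOp F Fin.revPerm * hecke F i := by
  have hasc (j : Fin n) :
      (Fin.revPerm * adjSwap j : Perm (Fin (n + 1))) j.castSucc <
        (Fin.revPerm * adjSwap j : Perm (Fin (n + 1))) j.succ := by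
    rw [Perm.mul_apply, Perm.mul_apply, adjSwap_castSucc, adjSwap_succ]
    exact Fin.rev_lt_rev.2 j.castSucc_lt_succ
  have hright : posOp F (Fin.revPerm * adjSwap i) * hecke F i = posOp F Fin.revPerm := by
    rw [← posOp_mul_adjSwap (hasc i), mul_assoc, adjSwap_mul_self, mul_one]
  have hleft : hecke F i.rev * posOp F (Fin.revPerm * adjSwap i) = posOp F Fin.revPerm := by
    have hinv : (adjSwap i.rev * Fin.revPerm)⁻¹ = Fin.revPerm * adjSwap i.rev := by
      rw [mul_inv_rev, adjSwap_inv]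
      rfl
    rw [revPerm_mul_adjSwap, ← posOp_adjSwap_mul (by rw [hinv]; exact hasc i.rev), ← mul_assoc,
      adjSwap_mul_self, one_mul]
  rw [← hleft, mul_assoc, hright, hleft]

lemma commute_hecke_posOp_revPerm_sq (i : Fin n) :
    Commute (hecke F i) (posOp F Fin.revPerm * posOp F Fin.revPerm) := by
  have h := hecke_rev_mul_posOp_revPerm (F := F) i.rev
  rw [Fin.rev_rev] at h
  rw [commute_iff_eq, ← mul_assoc, h, mul_assoc, hecke_rev_mul_posOp_revPerm, mul_assoc]

lemma abs_eigenvalue_posOp_revPerm_mul_le (hn : 1 ≤ n) {v : EuclideanSpace ℝ (CompleteFlag F n)}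
    (hv : v ≠ 0) (huv : inner ℝ (indicatorVec Finset.univ) v = 0) {μ : ℝ}
    (hμ : posOp F Fin.revPerm v = μ • v) :
    |μ| * √(Nat.card F) ^ (n + 1) ≤ (Nat.card F : ℝ) ^ (n + 1).choose 2 := by
  obtain ⟨l, hl, hprod⟩ := exists_posOp_eq_prod (F := F) (Fin.revPerm : Perm (Fin (n + 1)))
  rw [card_inversionSet_revPerm] at hl
  have hcomm := commute_hecke_posOp_revPerm_sq (F := F) (n := n)
  rw [hprod] at hμ hcomm
  have hbound := isHeckeFamily_hecke.abs_eigenvalue_pow_mul_le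
    (Nat.one_lt_cast.2 Finite.one_lt_card) isSymmetric_hecke hecke_indicatorVec_univ
    (fun _ => mem_span_of_forall_hecke_eq_smul) hcomm hv huv hμ
  have hpow : (√(Nat.card F) ^ (n + 1)) ^ n = (Nat.card F : ℝ) ^ (n + 1).choose 2 := by
    conv_rhs => rw [← Real.sq_sqrt (Nat.cast_nonneg (Nat.card F))]
    rw [← pow_mul, ← pow_mul, Nat.choose_two_right,
      Nat.mul_div_cancel' (Nat.even_mul_pred_self _).two_dvd, Nat.add_sub_cancel]
  refine le_of_pow_le_pow_left₀ (Nat.one_le_iff_ne_zero.1 hn) (by positivity) ?_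
  rwa [mul_pow, hpow, ← hl]

lemma posOp_indicatorVec_univ (w : Perm (Fin (n + 1))) :
    posOp F w (indicatorVec Finset.univ) =
      (Nat.card F : ℝ) ^ (inversionSet w).card • indicatorVec Finset.univ := by
  obtain ⟨l, hl, hprod⟩ := exists_posOp_eq_prod (F := F) w
  rw [hprod, ← hl]
  clear hl hprod
  induction l with
  | nil => simp
  | cons i l ih =>
    rw [List.map_cons, List.prod_cons, End.mul_apply, ih, map_smul, hecke_indicatorVec_univ,
      smul_smul, List.length_cons, pow_succ]

lemma relOp_opposite :
    relOp (Opposite : CompleteFlag F n → CompleteFlag F n → Prop) = posOp F Fin.revPerm :=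
  relOp_congr fun _ _ => inPos_revPerm_iff.symm

lemma card_mul_le_of_forall_not_opposite (hn : 1 ≤ n) {C : Finset (CompleteFlag F n)}
    (hC : ∀ G ∈ C, ∀ H ∈ C, ¬ G.Opposite H) :
    C.card * (1 + √(Nat.card F) ^ (n + 1)) ≤ Nat.card (CompleteFlag F n) := by
  have hq : (0 : ℝ) < Nat.card F := Nat.cast_pos.2 Nat.card_pos
  set D := (Nat.card F : ℝ) ^ (n + 1).choose 2
  set s := √(Nat.card F) ^ (n + 1)
  have hs : 0 < s := pow_pos (Real.sqrt_pos.2 hq) _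
  have hm : 0 < D / s := div_pos (pow_pos hq _) hs
  have hD : relOp Opposite (indicatorVec (X := CompleteFlag F n) Finset.univ) =
      D • indicatorVec Finset.univ := by
    rw [relOp_opposite, posOp_indicatorVec_univ, card_inversionSet_revPerm]
  have heig (v : EuclideanSpace ℝ (CompleteFlag F n)) (hv : v ≠ 0)
      (huv : inner ℝ (indicatorVec Finset.univ) v = 0) (μ : ℝ) (hμ : relOp Opposite v = μ • v) :
      -(D / s) ≤ μ := by
    rw [relOp_opposite] at hμ
    exact neg_le_of_abs_le
      ((le_div_iff₀ hs).2 (abs_eigenvalue_posOp_revPerm_mul_le hn hv huv hμ))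
  have hratio := card_mul_le_of_independent (fun _ _ => Opposite.symm) hm.le hD heig hC
  rw [← Nat.card_eq_fintype_card] at hratio
  refine le_of_mul_le_mul_left ?_ hm
  calc D / s * (C.card * (1 + s)) = C.card * (D + D / s) := by field_simp; ring
    _ ≤ D / s * Nat.card (CompleteFlag F n) := hratio

end Operators

end CompleteFlag

/-- If `C` is an EKR-set of complete flags in `F_q^{n+1}` (no two members opposite),
then `|C| · (1 + (√q)^{n+1}) ≤ N` where `N` is the total number of complete flags. -/
theorem EKR_complete_flags_bound (n : ℕ) (hn : 1 ≤ n)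
    (F : Type) [Field F] [Fintype F] (q : ℕ) (hq : q = Fintype.card F)
    (C : Set (CompleteFlag F n))
    (hC : ∀ F1 ∈ C, ∀ F2 ∈ C, ¬ F1.Opposite F2) :
    (Nat.card C : ℝ) * (1 + Real.sqrt q ^ (n + 1)) ≤ (Nat.card (CompleteFlag F n) : ℝ) := by
  classical
  subst hq
  have hbound := CompleteFlag.card_mul_le_of_forall_not_opposite hn (C := C.toFinset)
    (by simpa only [Set.mem_toFinset] using hC)
  rwa [Nat.card_eq_fintype_card, ← Nat.card_eq_card_toFinset] at hbound
end

section
/- Let m ≥ 2, n = 2m−1, q a prime power, and J ⊆ {1, …, n} a self-opposite type with m ∈ J. Fix a 1-dimensional subspace P of V = F_q^{n+1}, and let C be the set of all flags (U_k)_{k∈J} of type J in V with P ⊆ U_m. Then C is an EKR-set of flags of type J (no two of its members are opposite), and |C| · (1 + q^m) = v, where v is the total number of flags of type J in V; i.e., C attains the upper bound v/(1 + q^{(n+1)/2}). -/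
/-- A flag of type `J ⊆ {1, …, n}` in `V = F^{n+1}`: a family of subspaces `(U_k)_{k∈J}`
with `dim U_k = k` and `U_k ⊆ U_l` whenever `k ≤ l`. -/
structure FlagOfType (F : Type) [Field F] (n : ℕ) (J : Finset ℕ) where
  U : J → Submodule F (Fin (n + 1) → F)
  dim : ∀ k : J, Module.finrank F (U k) = (k : ℕ)
  mono : ∀ k l : J, (k : ℕ) ≤ (l : ℕ) → U k ≤ U l

/-- Two flags `(U_k)` and `(W_k)` of self-opposite type `J` are opposite if
`U_k ∩ W_{n+1−k} = 0` for all `k ∈ J`. -/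
def FlagOfType.Opposite {F : Type} [Field F] {n : ℕ} {J : Finset ℕ}
    (F1 F2 : FlagOfType F n J) : Prop :=
  ∀ k l : J, (l : ℕ) = n + 1 - (k : ℕ) → F1.U k ⊓ F2.U l = ⊥

/-!
The general linear group is transitive on lines, so every line lies in the `k`-dimensional member
of the same number `c` of flags. Counting pairs of a nonzero vector and a flag whose
`k`-dimensional member contains it gives `c (q ^ (n + 1) - 1) = N (q ^ k - 1)`, where `N` is the
number of all flags. For `n + 1 = 2 k` the factor `q ^ k - 1` cancels.
-/

section LinearAlgebra

variable {K V : Type*} [Field K] [AddCommGroup V] [Module K V]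

theorem exists_linearEquiv_map_eq_of_finrank_eq {P Q : Submodule K V}
    [FiniteDimensional K P] [FiniteDimensional K Q]
    (h : Module.finrank K P = Module.finrank K Q) :
    ∃ g : V ≃ₗ[K] V, P.map g.toLinearMap = Q := by
  let e : P ≃ₗ[K] Q := LinearEquiv.ofFinrankEq P Q h
  obtain ⟨g, hg⟩ := Submodule.exists_linearEquiv_restrict_eq e
  refine ⟨g, le_antisymm ?_ fun y hy => ?_⟩
  · rintro _ ⟨x, hx, rfl⟩
    exact hg ⟨x, hx⟩ ▸ (e ⟨x, hx⟩).2
  · refine ⟨e.symm ⟨y, hy⟩, (e.symm ⟨y, hy⟩).2, ?_⟩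
    rw [LinearEquiv.coe_coe, ← hg, e.apply_symm_apply]

theorem ncard_diff_zero_eq_pow_finrank_sub_one (W : Submodule K V) [FiniteDimensional K W] :
    ((W : Set V) \ {0}).ncard = Nat.card K ^ Module.finrank K W - 1 := by
  rw [Set.ncard_sdiff_singleton_of_mem W.zero_mem, ← Nat.card_coe_set_eq]
  exact congrArg (· - 1) (Module.natCard_eq_pow_finrank (K := K) (V := W))

end LinearAlgebra

theorem mul_one_add_eq_of_mul_sq_sub_one_eq {a b x : ℕ} (hx : 1 < x)
    (h : a * (x ^ 2 - 1) = b * (x - 1)) : a * (1 + x) = b := by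
  have hfactor : x ^ 2 - 1 = (1 + x) * (x - 1) := by
    simpa only [one_pow, add_comm 1] using Nat.sq_sub_sq x 1
  refine Nat.eq_of_mul_eq_mul_right (Nat.sub_pos_of_lt hx) ?_
  rw [mul_assoc, ← hfactor, h]

namespace FlagOfType

variable {F : Type} [Field F] {n : ℕ} {J : Finset ℕ}

theorem U_injective : Function.Injective (U : FlagOfType F n J → _) := by
  rintro ⟨_, _, _⟩ ⟨_, _, _⟩ rfl
  rfl

instance [Finite F] : Finite (FlagOfType F n J) :=
  Finite.of_injective U U_injective

/-- The image of a flag under a linear automorphism of the ambient space: the action of the general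
linear group on flags of a given type. -/
def map (g : (Fin (n + 1) → F) ≃ₗ[F] (Fin (n + 1) → F)) (A : FlagOfType F n J) :
    FlagOfType F n J where
  U k := (A.U k).map g.toLinearMap
  dim k := (g.finrank_map_eq (A.U k)).trans (A.dim k)
  mono k l hkl := Submodule.map_mono (A.mono k l hkl)

theorem map_symm_map (g : (Fin (n + 1) → F) ≃ₗ[F] (Fin (n + 1) → F)) (A : FlagOfType F n J) :
    (A.map g).map g.symm = A :=
  U_injective <| funext fun _ => (Submodule.map_symm_eq_iff g).mpr rfl

theorem map_injective (g : (Fin (n + 1) → F) ≃ₗ[F] (Fin (n + 1) → F)) :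
    Function.Injective (map (J := J) g) :=
  Function.LeftInverse.injective (map_symm_map g)

/-- The pencil of flags through `P` at position `k`: those whose `k`-dimensional member
contains `P`. The extremal families of the theorem are the pencils through a point. -/
def pencil (P : Submodule F (Fin (n + 1) → F)) (k : J) : Set (FlagOfType F n J) :=
  {A | P ≤ A.U k}

theorem not_opposite_of_mem_pencil {P : Submodule F (Fin (n + 1) → F)} (hP : P ≠ ⊥) {k l : J}
    (hkl : (l : ℕ) = n + 1 - k) {A B : FlagOfType F n J} (hA : A ∈ pencil P k)
    (hB : B ∈ pencil P l) : ¬ A.Opposite B := fun hAB =>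
  hP (le_bot_iff.mp ((le_inf hA hB).trans_eq (hAB k l hkl)))

theorem image_map_pencil (g : (Fin (n + 1) → F) ≃ₗ[F] (Fin (n + 1) → F))
    (P : Submodule F (Fin (n + 1) → F)) (k : J) :
    map g '' pencil P k = pencil (P.map g.toLinearMap) k := by
  ext B
  constructor
  · rintro ⟨A, hA, rfl⟩
    exact Submodule.map_mono hA
  · intro hB
    have hP : P ≤ (B.map g.symm).U k := fun x hx =>
      ⟨g x, hB (Submodule.mem_map_of_mem hx), g.symm_apply_apply x⟩
    exact ⟨B.map g.symm, hP, map_symm_map g.symm B⟩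

theorem ncard_pencil_eq_of_finrank_eq {P Q : Submodule F (Fin (n + 1) → F)}
    (h : Module.finrank F P = Module.finrank F Q) (k : J) :
    (pencil P k).ncard = (pencil Q k).ncard := by
  obtain ⟨g, rfl⟩ := exists_linearEquiv_map_eq_of_finrank_eq h
  rw [← image_map_pencil, Set.ncard_image_of_injective _ (map_injective g)]

theorem ncard_pencil_mul_pow_sub_one [Finite F] {P : Submodule F (Fin (n + 1) → F)}
    (hP : Module.finrank F P = 1) (k : J) :
    (pencil P k).ncard * (Nat.card F ^ (n + 1) - 1) =
      Nat.card (FlagOfType F n J) * (Nat.card F ^ (k : ℕ) - 1) := by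
  classical
  have := Fintype.ofFinite F
  have := Fintype.ofFinite (FlagOfType F n J)
  let nonzero : Finset (Fin (n + 1) → F) := Finset.univ.erase 0
  have card_nonzero : nonzero.card = Nat.card F ^ (n + 1) - 1 := by
    rw [Finset.card_erase_of_mem (Finset.mem_univ _), Finset.card_univ, ← Nat.card_eq_fintype_card,
      Module.natCard_eq_pow_finrank (K := F), Module.finrank_fin_fun]
  have flags_through (v) (hv : v ∈ nonzero) :
      (Finset.univ.bipartiteAbove (fun v (A : FlagOfType F n J) => v ∈ A.U k) v).card =
        (pencil P k).ncard := by
    have hspan : Module.finrank F (F ∙ v) = Module.finrank F P := by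
      rw [finrank_span_singleton (Finset.ne_of_mem_erase hv), hP]
    rw [← ncard_pencil_eq_of_finrank_eq hspan k, ← Set.ncard_coe_finset]
    congr 1
    ext A
    simp [pencil, Submodule.span_singleton_le_iff_mem]
  have vectors_in (A : FlagOfType F n J) (_ : A ∈ Finset.univ) :
      (nonzero.bipartiteBelow (fun v (A : FlagOfType F n J) => v ∈ A.U k) A).card =
        Nat.card F ^ (k : ℕ) - 1 := by
    rw [← A.dim k, ← ncard_diff_zero_eq_pow_finrank_sub_one, ← Set.ncard_coe_finset]
    congr 1
    ext v
    simp [nonzero, and_comm]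
  rw [mul_comm, ← card_nonzero, Nat.card_eq_fintype_card, ← Finset.card_univ]
  exact Finset.card_mul_eq_card_mul _ flags_through vectors_in

end FlagOfType

theorem EKR_flags_point_pencil_sharp_general {F : Type} [Field F] [Finite F] {n m : ℕ}
    (hn : n + 1 = 2 * m) {J : Finset ℕ} (hmJ : m ∈ J) {P : Submodule F (Fin (n + 1) → F)}
    (hP : Module.finrank F P = 1) :
    (∀ A ∈ FlagOfType.pencil P ⟨m, hmJ⟩, ∀ B ∈ FlagOfType.pencil P ⟨m, hmJ⟩, ¬ A.Opposite B) ∧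
      Nat.card (FlagOfType.pencil P ⟨m, hmJ⟩) * (1 + Nat.card F ^ m) =
        Nat.card (FlagOfType F n J) := by
  have hP_ne : P ≠ ⊥ := Submodule.one_le_finrank_iff.mp hP.ge
  have hm_opp : m = n + 1 - m := by omega
  have hq_pow : 1 < Nat.card F ^ m := Nat.one_lt_pow (by omega) Finite.one_lt_card
  refine ⟨fun A hA B hB => FlagOfType.not_opposite_of_mem_pencil hP_ne hm_opp hA hB,
    mul_one_add_eq_of_mul_sq_sub_one_eq hq_pow ?_⟩
  rw [← pow_mul, mul_comm m, ← hn, Nat.card_coe_set_eq]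
  exact FlagOfType.ncard_pencil_mul_pow_sub_one hP ⟨m, hmJ⟩

/-- **Sharp examples in projective spaces.** Let `m ≥ 2`, `n = 2m−1`, `J` a self-opposite
type with `m ∈ J`, and `P` a fixed `1`-dimensional subspace of `F_q^{n+1}`. The set `C` of
all flags of type `J` whose `m`-dimensional member contains `P` is an EKR-set of flags of
type `J` attaining the upper bound: `|C| · (1 + q^m) = v`, with `v` the total number of
flags of type `J`. -/
theorem EKR_flags_point_pencil_sharp (m : ℕ) (hm : 2 ≤ m) (n : ℕ) (hn : n = 2 * m - 1)
    (F : Type) [Field F] [Fintype F] (q : ℕ) (hq : q = Fintype.card F)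
    (J : Finset ℕ) (hJsub : J ⊆ Finset.Icc 1 n)
    (hJself : ∀ k, k ∈ J ↔ n + 1 - k ∈ J) (hmJ : m ∈ J)
    (P : Submodule F (Fin (n + 1) → F)) (hP : Module.finrank F P = 1)
    (C : Set (FlagOfType F n J))
    (hC : C = {Fl : FlagOfType F n J | P ≤ Fl.U ⟨m, hmJ⟩}) :
    (∀ F1 ∈ C, ∀ F2 ∈ C, ¬ F1.Opposite F2) ∧
      Nat.card C * (1 + q ^ m) = Nat.card (FlagOfType F n J) := by
  subst hC hq
  rw [← Nat.card_eq_fintype_card]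
  exact EKR_flags_point_pencil_sharp_general (by omega) hmJ hP
end
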